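/- Let F = F_q with q ≡ 1 mod M, g a generator of F^×, h : Z_{q-1} → Z_M reduction mod M, and nmExt(x,y) = h(log_g(x+y)). Then nmExt is a (k, ε)-non-malleable extractor with ε = M·q^{1/4}·2^{1-k/2}: for any source X on F with H_∞(X) ≥ k, Y uniform on F independent of X, and any A : F → F with A(y) ≠ y for all y, the distribution (nmExt(X,Y), nmExt(X,A(Y)), Y) is ε-close to (U_{Z_M}, nmExt(X,A(Y)), Y). -/

import Mathlib

open Finset
open scoped Classical

/-!
Composing `nmExt` with a character of `ℤ/M` gives a multiplicative character of `F`. By Parseval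
on `ℤ/M × ℤ/M` and Cauchy–Schwarz, the statistical distance is controlled by the second moments
`∑ y, |∑ s, μ(s) χ(s + y) ψ(s + A y)|²` with `χ` nontrivial, and the duality principle of the large
sieve bounds these by the Gram matrix of the columns `s ↦ χ(s + y) ψ(s + A y)`. Apart from the
`O(q)` entries with `y = y'`, `y = A y'` or `y' = A y`, each entry is, up to at most four terms,
`∑ s, χ((s + y) / (s + y')) ψ((s + A y) / (s + A y'))`, which has size at most `3 √q`.

For this character sum, Stepanov's method bounds, over every finite extension `E` of `F`, the number
of `x` for which `(x + a₁) / (x + a₂)` and `(x + a₃) / (x + a₄)` lie in prescribed classes modulo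
`(q - 1)`-th powers, which gives a bound `B √|E|` with `B` independent of `E`. The associated
`L`-function is a polynomial of degree at most three, and the bounds over all extensions confine
its inverse roots to the disc of radius `√q`, so the constant `B` can be replaced by `3`.
-/

section Elimination

open Polynomial

variable {R E : Type*} [CommRing R] [Field E]

theorem natDegree_det_le_sum {n : Type*} [Fintype n] [DecidableEq n] (A : Matrix n n R[X])
    (d : n → ℕ) (hA : ∀ i j, (A i j).natDegree ≤ d j) : A.det.natDegree ≤ ∑ j, d j := by
  rw [Matrix.det_apply]
  refine natDegree_sum_le_of_forall_le _ _ fun σ _ => (natDegree_smul_le _ _).trans ?_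
  exact (natDegree_prod_le _ _).trans (sum_le_sum fun j _ => hA (σ j) j)

theorem natDegree_resultant_le {f g : R[X][X]} {a b : ℕ} (m n : ℕ)
    (hf : ∀ i, (f.coeff i).natDegree ≤ a) (hg : ∀ i, (g.coeff i).natDegree ≤ b) :
    (resultant f g m n).natDegree ≤ m * b + n * a := by
  let columnBound : Fin (m + n) → ℕ := Fin.addCases (fun _ => b) fun _ => a
  have hcol : ∀ i j, (sylvester f g m n i j).natDegree ≤ columnBound j := by
    intro i j
    refine Fin.addCases (fun k => ?_) (fun k => ?_) j <;>
      simp only [sylvester, Matrix.of_apply, columnBound, Fin.addCases_left,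
        Fin.addCases_right] <;> split_ifs <;> simp [hf, hg]
  calc (resultant f g m n).natDegree ≤ ∑ j, columnBound j := natDegree_det_le_sum _ _ hcol
    _ = m * b + n * a := by simp [columnBound, Fin.sum_univ_add]

theorem resultant_ne_zero_of_irreducible [IsDomain R] [NormalizedGCDMonoid R] {f P : R[X]}
    (hf : Irreducible f) (hP : P ≠ 0) (hdeg : P.natDegree < f.natDegree) :
    resultant f P ≠ 0 := by
  let K := FractionRing R
  have hinj : Function.Injective (algebraMap R K) := IsFractionRing.injective R K
  have hfK : Irreducible (f.map (algebraMap R K)) :=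
    ((hf.isPrimitive (by omega)).irreducible_iff_irreducible_map_fraction_map).1 hf
  have hPK : P.map (algebraMap R K) ≠ 0 := (Polynomial.map_ne_zero_iff hinj).2 hP
  have hcoprime : IsCoprime (f.map (algebraMap R K)) (P.map (algebraMap R K)) := by
    refine hfK.coprime_iff_not_dvd.2 fun hdvd => ?_
    have := natDegree_le_of_dvd hdvd hPK
    rw [natDegree_map_eq_of_injective hinj, natDegree_map_eq_of_injective hinj] at this
    omega
  intro hzero
  have hres := resultant_ne_zero _ _ hcoprime
  rw [natDegree_map_eq_of_injective hinj, natDegree_map_eq_of_injective hinj,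
    resultant_map_map, hzero, map_zero] at hres
  exact hres rfl

theorem exists_bezout_eq_C_of_irreducible {f P : E[X][X]} {a b : ℕ} (hf : Irreducible f)
    (hP : P ≠ 0) (hdeg : P.natDegree < f.natDegree)
    (ha : ∀ i, (f.coeff i).natDegree ≤ a) (hb : ∀ i, (P.coeff i).natDegree ≤ b) :
    ∃ (S : E[X]) (p q : E[X][X]), S ≠ 0 ∧ S.natDegree ≤ f.natDegree * (b + a) ∧
      f * p + P * q = C S := by
  obtain ⟨p, q, -, -, hpq⟩ :=
    exists_mul_add_mul_eq_C_resultant f P le_rfl le_rfl (Or.inl (by omega : f.natDegree ≠ 0))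
  refine ⟨_, p, q, resultant_ne_zero_of_irreducible hf hP hdeg, ?_, hpq⟩
  calc (resultant f P).natDegree ≤ f.natDegree * b + P.natDegree * a :=
        natDegree_resultant_le _ _ ha hb
    _ ≤ f.natDegree * (b + a) := by rw [mul_add]; gcongr

end Elimination

section Kummer

open Polynomial

/-- The equation `D * Y ^ M = N` of the Kummer cover `Y ^ M = N / D`, cleared of denominators. -/
noncomputable def kummerPolynomial {R : Type*} [CommRing R] (N D : R) (M : ℕ) : R[X] :=
  C D * X ^ M - C N

/-- Reduction of `D ^ e * P` modulo `kummerPolynomial N D M` to degree less than `M` in `Y`: each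
`Y ^ k` is replaced by `(N / D) ^ (k / M) * Y ^ (k % M)`. It is meaningful for
`P.natDegree < M * (e + 1)`, where the exponent `e - k / M` is not truncated. -/
noncomputable def kummerReduce {R : Type*} [CommRing R] (N D : R) (M e : ℕ) : R[X] →ₗ[R] R[X] :=
  lsum fun k => (monomial (k % M)).comp (LinearMap.mulLeft R (N ^ (k / M) * D ^ (e - k / M)))

variable {R S E : Type*} [CommRing R] [CommRing S] [Field E] {M : ℕ}

theorem coeff_kummerPolynomial (N D : R) (M n : ℕ) :
    (kummerPolynomial N D M).coeff n = (if n = M then D else 0) - if n = 0 then N else 0 := by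
  simp [kummerPolynomial, coeff_C, coeff_X_pow]

theorem eval₂_kummerPolynomial (N D : R) (M : ℕ) (ψ : R →+* S) (u : S) :
    (kummerPolynomial N D M).eval₂ ψ u = ψ D * u ^ M - ψ N := by
  simp [kummerPolynomial]

theorem degree_kummerPolynomial (hM : 0 < M) {N D : R} (hD : D ≠ 0) :
    (kummerPolynomial N D M).degree = M := by
  rw [kummerPolynomial, degree_sub_eq_left_of_degree_lt, degree_C_mul_X_pow _ hD]
  rw [degree_C_mul_X_pow _ hD]
  exact degree_C_le.trans_lt (by exact_mod_cast hM)

theorem irreducible_kummerPolynomial [IsDomain R] (hM : 0 < M) {N D π : R} (hND : IsCoprime N D)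
    (hπ : Prime π) (hπN : π ∣ N) (hπN2 : ¬ π ^ 2 ∣ N) : Irreducible (kummerPolynomial N D M) := by
  have hπD : ¬ π ∣ D := fun h => hπ.not_isUnit (hND.isUnit_of_dvd' hπN h)
  have hD : D ≠ 0 := fun h => hπD (h ▸ dvd_zero _)
  have hdeg := degree_kummerPolynomial hM (N := N) hD
  have hcoeff_M : (kummerPolynomial N D M).coeff M = D := by
    simp [coeff_kummerPolynomial, hM.ne']
  have hcoeff_zero : (kummerPolynomial N D M).coeff 0 = -N := by
    simp [coeff_kummerPolynomial, hM.ne]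
  have hprim : (kummerPolynomial N D M).IsPrimitive := fun c hc => by
    rw [C_dvd_iff_dvd_coeff] at hc
    exact hND.isUnit_of_dvd' (by simpa [hcoeff_zero] using hc 0) (hcoeff_M ▸ hc M)
  refine irreducible_of_eisenstein_criterion (P := Ideal.span {π})
    ((Ideal.span_singleton_prime hπ.ne_zero).2 hπ) ?_ ?_ ?_ ?_ hprim
  · rwa [leadingCoeff, natDegree_eq_of_degree_eq_some hdeg, hcoeff_M, Ideal.mem_span_singleton]
  · intro n hn
    have hnM : n < M := by rw [hdeg] at hn; exact_mod_cast hn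
    rw [coeff_kummerPolynomial, Ideal.mem_span_singleton, if_neg hnM.ne]
    split_ifs <;> simp [hπN]
  · rw [hdeg]; exact_mod_cast hM
  · rwa [hcoeff_zero, Ideal.span_singleton_pow, Ideal.mem_span_singleton, dvd_neg]

theorem natDegree_coeff_kummerPolynomial_le {N D : E[X]} {δ : ℕ} (hN : N.natDegree ≤ δ)
    (hD : D.natDegree ≤ δ) (i : ℕ) : ((kummerPolynomial N D M).coeff i).natDegree ≤ δ := by
  rw [coeff_kummerPolynomial]
  refine (natDegree_sub_le _ _).trans (max_le ?_ ?_) <;> split_ifs <;> simp [hN, hD]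

theorem kummerReduce_apply (N D : R) (M e : ℕ) (P : R[X]) :
    kummerReduce N D M e P =
      ∑ k ∈ P.support, monomial (k % M) (N ^ (k / M) * D ^ (e - k / M) * P.coeff k) := by
  simp [kummerReduce, lsum_apply, Polynomial.sum_def, mul_assoc]

theorem div_le_of_mem_support {e k : ℕ} {P : R[X]} (hP : P.natDegree < M * (e + 1))
    (hk : k ∈ P.support) : k / M ≤ e :=
  Nat.lt_succ_iff.1 (Nat.div_lt_of_lt_mul ((le_natDegree_of_mem_supp k hk).trans_lt hP))

theorem eval₂_kummerReduce {N D : R} {e : ℕ} {P : R[X]} (hP : P.natDegree < M * (e + 1))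
    (ψ : R →+* S) {u : S} (hu : ψ D * u ^ M = ψ N) :
    (kummerReduce N D M e P).eval₂ ψ u = ψ D ^ e * P.eval₂ ψ u := by
  rw [kummerReduce_apply, eval₂_finsetSum, eval₂_eq_sum, Polynomial.sum_def, mul_sum]
  refine sum_congr rfl fun k hk => ?_
  have hDe : ψ D ^ e = ψ D ^ (e - k / M) * ψ D ^ (k / M) := by
    rw [← pow_add, Nat.sub_add_cancel (div_le_of_mem_support hP hk)]
  have huk : u ^ k = (u ^ M) ^ (k / M) * u ^ (k % M) := by
    rw [← pow_mul, ← pow_add, Nat.div_add_mod]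
  rw [eval₂_monomial, map_mul, map_mul, map_pow, map_pow, ← hu, hDe, huk]
  ring

theorem natDegree_kummerReduce_lt (hM : 0 < M) (N D : R) (e : ℕ) (P : R[X]) :
    (kummerReduce N D M e P).natDegree < M := by
  rw [kummerReduce_apply]
  refine (natDegree_sum_le_of_forall_le (n := M - 1) _ _ fun k _ => ?_).trans_lt (by omega)
  exact (natDegree_monomial_le _).trans (Nat.le_sub_one_of_lt (Nat.mod_lt k hM))

theorem natDegree_coeff_kummerReduce_le {N D : E[X]} {δ e A : ℕ} (hN : N.natDegree ≤ δ)
    (hD : D.natDegree ≤ δ) {P : E[X][X]} (hP : P.natDegree < M * (e + 1))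
    (hA : ∀ k, (P.coeff k).natDegree ≤ A) (i : ℕ) :
    ((kummerReduce N D M e P).coeff i).natDegree ≤ A + e * δ := by
  rw [kummerReduce_apply, finsetSum_coeff]
  refine natDegree_sum_le_of_forall_le _ _ fun k hk => ?_
  rw [coeff_monomial]
  split_ifs
  · have hke := div_le_of_mem_support hP hk
    calc (N ^ (k / M) * D ^ (e - k / M) * P.coeff k).natDegree
        ≤ k / M * N.natDegree + (e - k / M) * D.natDegree + (P.coeff k).natDegree := by
          compute_degree!
      _ ≤ k / M * δ + (e - k / M) * δ + A := by gcongr; exact hA k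
      _ = A + e * δ := by rw [← add_mul, Nat.add_sub_cancel' hke, add_comm]
  · simp

end Kummer

section FrobeniusIndependence

open PowerSeries

variable {E I J : Type*} [Field E] [Fintype I] {p : ℕ} [Fact p.Prime] [CharP E p] {ν : ℕ}

-- Modulo `X ^ p ^ ν` a `p ^ ν`-th power is a constant, so the constant coefficients of the `B i`
-- vanish; dividing by `X ^ p ^ ν` shifts the remaining coefficients down.
theorem eq_zero_of_sum_mul_pow_char_pow_eq_zero {e : I → E⟦X⟧}
    (he : ∀ t : I → E, X ^ p ^ ν ∣ ∑ i, t i • e i → t = 0) {B : I → E⟦X⟧}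
    (hB : ∑ i, e i * B i ^ p ^ ν = 0) : B = 0 := by
  have : CharP E⟦X⟧ p := charP_of_injective_algebraMap (C_injective (R := E)) p
  have hp : p ^ ν ≠ 0 := pow_ne_zero _ (Fact.out : p.Prime).ne_zero
  suffices hcoeff : ∀ n (B : I → E⟦X⟧), ∑ i, e i * B i ^ p ^ ν = 0 → ∀ i, coeff n (B i) = 0 from
    funext fun i => PowerSeries.ext fun n => hcoeff n B hB i
  intro n
  have hzero : ∀ B : I → E⟦X⟧, ∑ i, e i * B i ^ p ^ ν = 0 → ∀ i, constantCoeff (B i) = 0 := by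
    intro B hB i
    refine pow_eq_zero_iff hp |>.1 (congrFun (he (fun i => constantCoeff (B i) ^ p ^ ν) ?_) i)
    rw [← dvd_neg, ← zero_sub, ← hB, ← sum_sub_distrib]
    refine dvd_sum fun i _ => ?_
    rw [smul_eq_C_mul, mul_comm, map_pow, ← sub_mul, ← sub_pow_char_pow]
    exact (pow_dvd_pow_of_dvd (X_dvd_iff.2 (by simp)) _).mul_right _
  induction n with
  | zero => simpa using hzero
  | succ n ih =>
    intro B hB i
    choose shift hshift using fun i => X_dvd_iff.2 (hzero B hB i)
    have hsum : X ^ p ^ ν * ∑ i, e i * shift i ^ p ^ ν = 0 := by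
      rw [← hB, mul_sum]
      exact sum_congr rfl fun i _ => by rw [hshift i]; ring
    rw [hshift i, coeff_succ_X_mul]
    exact ih shift ((mul_eq_zero.1 hsum).resolve_left (pow_ne_zero _ X_ne_zero)) i

theorem linearIndependent_mul_pow_char_pow [PerfectRing E p] [Finite J] {e : I → E⟦X⟧}
    (he : ∀ t : I → E, X ^ p ^ ν ∣ ∑ i, t i • e i → t = 0) {b : J → E⟦X⟧}
    (hb : LinearIndependent E b) :
    LinearIndependent E fun x : I × J => e x.1 * b x.2 ^ p ^ ν := by
  have : CharP E⟦X⟧ p := charP_of_injective_algebraMap (C_injective (R := E)) p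
  cases nonempty_fintype J
  rw [Fintype.linearIndependent_iff]
  intro c hc
  choose d hd using fun x => (bijective_iterateFrobenius E p ν).2 (c x)
  have hB : (fun i => ∑ j, d (i, j) • b j) = 0 := by
    refine eq_zero_of_sum_mul_pow_char_pow_eq_zero he ?_
    rw [← hc, Fintype.sum_prod_type]
    refine sum_congr rfl fun i _ => ?_
    rw [sum_pow_char_pow, mul_sum]
    refine sum_congr rfl fun j _ => ?_
    rw [smul_pow, ← hd, iterateFrobenius_def, mul_smul_comm]
  intro x
  rw [← hd x, Fintype.linearIndependent_iff.1 hb (fun j => d (x.1, j)) (congrFun hB x.1) x.2,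
    map_zero]

end FrobeniusIndependence

section TaylorSeries

open Polynomial
open scoped PowerSeries

variable {E : Type*} [Field E] {M : ℕ}

/-- The expansion of a polynomial in the local parameter `X - v`, as a power series. -/
noncomputable def taylorSeries (v : E) : E[X] →ₐ[E] E⟦X⟧ :=
  (coeToPowerSeries.algHom E).comp (taylorAlgHom v)

theorem constantCoeff_taylorSeries (v : E) (g : E[X]) :
    PowerSeries.constantCoeff (taylorSeries v g) = g.eval v := by
  simp [taylorSeries, taylor_coeff_zero, coeToPowerSeries.algHom_apply]

theorem eq_zero_of_X_pow_dvd_taylorSeries {v : E} {g : E[X]} {n : ℕ} (hg : g.natDegree < n)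
    (hdvd : PowerSeries.X ^ n ∣ taylorSeries v g) : g = 0 := by
  refine taylor_injective v (Polynomial.ext fun i => ?_)
  rw [map_zero, coeff_zero]
  rcases lt_or_ge i n with hi | hi
  · simpa [taylorSeries, coeToPowerSeries.algHom_apply] using PowerSeries.X_pow_dvd_iff.1 hdvd i hi
  · exact coeff_eq_zero_of_natDegree_lt (by rw [natDegree_taylor]; omega)

theorem exists_powerSeries_pow_eq (hM : (M : E) ≠ 0) {f : E⟦X⟧} {u₀ : E} (hu₀ : u₀ ≠ 0)
    (hf : PowerSeries.constantCoeff f = u₀ ^ M) : ∃ u : E⟦X⟧, u ^ M = f := by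
  have hM0 : M ≠ 0 := by rintro rfl; simp at hM
  have happrox : (X ^ M - C f).eval (PowerSeries.C u₀) ∈ Ideal.span {(PowerSeries.X : E⟦X⟧)} := by
    rw [Ideal.mem_span_singleton, PowerSeries.X_dvd_iff]
    simp [hf]
  have hderiv : IsUnit ((derivative (X ^ M - C f)).eval (PowerSeries.C u₀)) := by
    rw [PowerSeries.isUnit_iff_constantCoeff]
    simp [derivative_X_pow, hM, hu₀]
  obtain ⟨u, hu, -⟩ := (IsAdicComplete.henselianRing E⟦X⟧
    (Ideal.span {PowerSeries.X})).is_henselian _ (monic_X_pow_sub_C f hM0) _ happrox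
    (hderiv.map _)
  exact ⟨u, by simpa [sub_eq_zero] using hu⟩

theorem exists_taylorSeries_mul_pow_eq (hM : (M : E) ≠ 0) {N D : E[X]} {V U : E}
    (hD : D.eval V ≠ 0) (hU : U ≠ 0) (hVU : D.eval V * U ^ M = N.eval V) :
    ∃ u : E⟦X⟧, taylorSeries V D * u ^ M = taylorSeries V N := by
  have hDinv : taylorSeries V D * (taylorSeries V D)⁻¹ = 1 :=
    PowerSeries.mul_inv_cancel _ (by rwa [constantCoeff_taylorSeries])
  obtain ⟨u, hu⟩ := exists_powerSeries_pow_eq hM (f := taylorSeries V N * (taylorSeries V D)⁻¹) hU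
    (by rw [map_mul, PowerSeries.constantCoeff_inv, constantCoeff_taylorSeries,
      constantCoeff_taylorSeries, ← hVU]; field_simp)
  exact ⟨u, by rw [hu]; linear_combination taylorSeries V N * hDinv⟩

theorem eq_zero_of_X_pow_dvd_eval₂_taylorSeries {f P : E[X][X]} {v : E} {u : E⟦X⟧} {δ l r : ℕ}
    (hf : Irreducible f) (hfu : f.eval₂ (taylorSeries v : E[X] →+* E⟦X⟧) u = 0)
    (hdeg : P.natDegree < f.natDegree) (hδ : ∀ i, (f.coeff i).natDegree ≤ δ)
    (hl : ∀ i, (P.coeff i).natDegree ≤ l) (hr : f.natDegree * (l + δ) < r)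
    (hdvd : PowerSeries.X ^ r ∣ P.eval₂ (taylorSeries v : E[X] →+* E⟦X⟧) u) : P = 0 := by
  by_contra hP
  obtain ⟨S, a, b, hS, hSdeg, hab⟩ := exists_bezout_eq_C_of_irreducible hf hP hdeg hδ hl
  refine hS (eq_zero_of_X_pow_dvd_taylorSeries (v := v) (hSdeg.trans_lt hr) ?_)
  have heval := congrArg (eval₂ (taylorSeries v : E[X] →+* E⟦X⟧) u) hab
  rw [eval₂_add, eval₂_mul, eval₂_mul, hfu, zero_mul, zero_add, eval₂_C] at heval
  exact heval ▸ hdvd.mul_right _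

end TaylorSeries

section SparsePolynomial

open Polynomial

variable {E ι S : Type*} [Field E] [Fintype ι] [CommRing S] [Algebra E S]

/-- The bivariate polynomial `∑ x, γ x * X ^ α x * Y ^ β x`, linearly in the coefficients `γ`. -/
noncomputable def sparsePolynomial (α β : ι → ℕ) : (ι → E) →ₗ[E] E[X][X] :=
  Fintype.linearCombination E fun x => monomial (β x) (X ^ α x)

theorem eval₂_sparsePolynomial (α β : ι → ℕ) (γ : ι → E) (ψ : E[X] →ₐ[E] S) (u : S) :
    (sparsePolynomial α β γ).eval₂ (ψ : E[X] →+* S) u =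
      ∑ x, γ x • (ψ X ^ α x * u ^ β x) := by
  rw [sparsePolynomial, Fintype.linearCombination_apply, eval₂_finsetSum]
  refine sum_congr rfl fun x _ => ?_
  rw [smul_monomial, eval₂_monomial, RingHom.coe_coe, map_smul, map_pow, smul_mul_assoc]

theorem coeff_sparsePolynomial (α β : ι → ℕ) (γ : ι → E) (k : ℕ) :
    (sparsePolynomial α β γ).coeff k = ∑ x, if β x = k then γ x • X ^ α x else 0 := by
  simp [sparsePolynomial, Fintype.linearCombination_apply, coeff_monomial]

theorem natDegree_sparsePolynomial_lt {α β : ι → ℕ} {b : ℕ} (hb : 0 < b) (hβ : ∀ x, β x < b)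
    (γ : ι → E) : (sparsePolynomial α β γ).natDegree < b := by
  refine Nat.lt_of_le_sub_one hb (natDegree_le_iff_coeff_eq_zero.2 fun k hk => ?_)
  rw [coeff_sparsePolynomial]
  exact sum_eq_zero fun x _ => if_neg (by have := hβ x; omega)

theorem natDegree_coeff_sparsePolynomial_le {α β : ι → ℕ} {a : ℕ} (hα : ∀ x, α x ≤ a)
    (γ : ι → E) (k : ℕ) : ((sparsePolynomial α β γ).coeff k).natDegree ≤ a := by
  rw [coeff_sparsePolynomial]
  refine natDegree_sum_le_of_forall_le _ _ fun x _ => ?_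
  split_ifs
  · exact (natDegree_smul_le _ _).trans ((natDegree_X_pow_le _).trans (hα x))
  · simp

theorem sparsePolynomial_injective {α β : ι → ℕ}
    (hαβ : Function.Injective fun x => (α x, β x)) :
    Function.Injective (sparsePolynomial (E := E) α β) := by
  refine (injective_iff_map_eq_zero _).2 fun γ hγ => funext fun y => ?_
  have hcoeff := congrArg (fun P : E[X][X] => (P.coeff (β y)).coeff (α y)) hγ
  simp only [coeff_sparsePolynomial, finsetSum_coeff, coeff_zero] at hcoeff
  rw [sum_eq_single_of_mem y (mem_univ y)] at hcoeff
  · simpa using hcoeff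
  · intro x _ hxy
    split_ifs with hβ
    · have hα : α y ≠ α x := fun h => hxy (hαβ (Prod.ext h.symm hβ))
      simp [coeff_X_pow, hα]
    · simp

end SparsePolynomial

section Stepanov

open Polynomial
open scoped PowerSeries

variable {E : Type*} [Field E] {M : ℕ}

theorem eq_zero_of_coeff_coeff_eq_zero {P : E[X][X]} {b : ℕ} (hM : P.natDegree < M)
    (hb : ∀ i, (P.coeff i).natDegree < b) (hP : ∀ i < M, ∀ j < b, (P.coeff i).coeff j = 0) :
    P = 0 := by
  ext i j
  rw [coeff_zero, coeff_zero]
  rcases lt_or_ge i M with hi | hi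
  · rcases lt_or_ge j b with hj | hj
    · exact hP i hi j hj
    · exact coeff_eq_zero_of_natDegree_lt ((hb i).trans_le hj)
  · rw [coeff_eq_zero_of_natDegree_lt (hM.trans_le hi), coeff_zero]

theorem exists_ne_zero_kummerReduce_sparsePolynomial_eq_zero {ι : Type*} [Fintype ι]
    {N D : E[X]} {δ e a : ℕ} (hM : 0 < M) (hN : N.natDegree ≤ δ) (hD : D.natDegree ≤ δ)
    {α β : ι → ℕ} (hα : ∀ x, α x < a) (hβ : ∀ x, β x < M * (e + 1))
    (hcard : M * (a + e * δ) < Fintype.card ι) :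
    ∃ γ : ι → E, γ ≠ 0 ∧ kummerReduce N D M e (sparsePolynomial α β γ) = 0 := by
  let coefficients : (ι → E) →ₗ[E] (Fin M × Fin (a + e * δ) → E) :=
    (LinearMap.pi fun k => (lcoeff E k.2).comp ((lcoeff E[X] k.1).restrictScalars E)).comp
      (((kummerReduce N D M e).restrictScalars E).comp (sparsePolynomial α β))
  have hker : LinearMap.ker coefficients ≠ ⊥ :=
    LinearMap.ker_ne_bot_of_finrank_lt (by simpa using hcard)
  obtain ⟨γ, hγ, hγ0⟩ := (Submodule.ne_bot_iff _).1 hker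
  have : Nonempty ι := Fintype.card_pos_iff.1 (pos_of_gt hcard)
  have ha : 0 < a := pos_of_gt (hα (Classical.arbitrary ι))
  have hdeg := natDegree_sparsePolynomial_lt (α := α) (by positivity) hβ γ
  refine ⟨γ, hγ0, eq_zero_of_coeff_coeff_eq_zero (b := a + e * δ)
    (natDegree_kummerReduce_lt hM _ _ _ _) (fun i => ?_) fun i hi j hj => ?_⟩
  · have := natDegree_coeff_kummerReduce_le hN hD hdeg
      (natDegree_coeff_sparsePolynomial_le (fun x => Nat.le_sub_one_of_lt (hα x)) γ) i
    omega
  · exact congrFun hγ (⟨i, hi⟩, ⟨j, hj⟩)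

theorem eval₂_sparsePolynomial_pow [Fintype E] {ι : Type*} [Fintype ι] {p σ r : ℕ}
    [Fact p.Prime] [CharP E p] (hcard : Fintype.card E = r * p ^ σ) (a a' b b' : ι → ℕ)
    (γ : ι → E) (V U : E) :
    (sparsePolynomial (fun x => a x + a' x * r) (fun x => b x + b' x * r) γ).eval₂
        (aeval V : E[X] →ₐ[E] E) U ^ p ^ σ =
      (sparsePolynomial (fun x => a x * p ^ σ + a' x) (fun x => b x * p ^ σ + b' x)
        (γ ^ p ^ σ)).eval₂ (aeval V : E[X] →ₐ[E] E) U := by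
  have hfrob : ∀ (W : E) i j, (W ^ (i + j * r)) ^ p ^ σ = W ^ (i * p ^ σ + j) := fun W i j => by
    rw [← pow_mul, add_mul, mul_assoc, ← hcard, pow_add, pow_add, mul_comm j, pow_mul W _ j,
      FiniteField.pow_card]
  rw [eval₂_sparsePolynomial, eval₂_sparsePolynomial, sum_pow_char_pow]
  refine sum_congr rfl fun x _ => ?_
  rw [_root_.smul_pow, mul_pow, hfrob, hfrob, Pi.pow_apply]

theorem eq_zero_of_X_pow_dvd_sum_smul {f : E[X][X]} {v : E} {u : E⟦X⟧} {δ l r : ℕ}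
    (hf : Irreducible f) (hfu : f.eval₂ (taylorSeries v : E[X] →+* E⟦X⟧) u = 0)
    (hfM : f.natDegree = M) (hM : 0 < M) (hδ : ∀ i, (f.coeff i).natDegree ≤ δ)
    (hr : M * (l + δ) < r) {t : Fin l × Fin M → E}
    (hdvd : PowerSeries.X ^ r ∣
      ∑ x, t x • (taylorSeries v X ^ (x.1 : ℕ) * u ^ (x.2 : ℕ))) : t = 0 := by
  rw [← eval₂_sparsePolynomial (fun x : Fin l × Fin M => (x.1 : ℕ)) fun x => (x.2 : ℕ)] at hdvd
  have hdeg := natDegree_sparsePolynomial_lt (α := fun x : Fin l × Fin M => (x.1 : ℕ)) hM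
    (fun x => x.2.2) t
  have hl := natDegree_coeff_sparsePolynomial_le (β := fun x : Fin l × Fin M => (x.2 : ℕ))
    (fun x => x.1.2.le) t
  subst hfM
  have hzero := eq_zero_of_X_pow_dvd_eval₂_taylorSeries hf hfu hdeg hδ hl hr hdvd
  have hinj : Function.Injective fun x : Fin l × Fin f.natDegree => ((x.1 : ℕ), (x.2 : ℕ)) :=
    Fin.val_injective.prodMap Fin.val_injective
  exact sparsePolynomial_injective hinj (hzero.trans (map_zero _).symm)

theorem linearIndependent_taylorSeries_X_pow_mul_pow {f : E[X][X]} {v : E} {u : E⟦X⟧}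
    {δ l m p ν : ℕ} [Fact p.Prime] [CharP E p] [PerfectRing E p] (hf : Irreducible f)
    (hfu : f.eval₂ (taylorSeries v : E[X] →+* E⟦X⟧) u = 0) (hfM : f.natDegree = M) (hM : 0 < M)
    (hδ : ∀ i, (f.coeff i).natDegree ≤ δ) (hr : M * (l + δ) < p ^ ν) :
    LinearIndependent E fun x : (Fin l × Fin M) × (Fin m × Fin M) =>
      taylorSeries v X ^ (x.1.1 + x.2.1 * p ^ ν : ℕ) * u ^ (x.1.2 + x.2.2 * p ^ ν : ℕ) := by
  have hlow : ∀ t : Fin l × Fin M → E, PowerSeries.X ^ p ^ ν ∣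
      ∑ x, t x • (taylorSeries v X ^ (x.1 : ℕ) * u ^ (x.2 : ℕ)) → t = 0 := fun t =>
    eq_zero_of_X_pow_dvd_sum_smul hf hfu hfM hM hδ hr
  have hhigh : LinearIndependent E fun x : Fin m × Fin M =>
      taylorSeries v X ^ (x.1 : ℕ) * u ^ (x.2 : ℕ) := by
    refine Fintype.linearIndependent_iff.2 fun t ht => congrFun ?_
    exact eq_zero_of_X_pow_dvd_sum_smul hf hfu hfM hM hδ (Nat.lt_succ_self _) (ht ▸ dvd_zero _)
  convert linearIndependent_mul_pow_char_pow hlow hhigh using 2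
  ring

theorem eq_zero_of_forall_pow_eq_pow {Q : E[X]} {ζ U : E} (hM : 0 < M)
    (hζ : IsPrimitiveRoot ζ M) (hU : U ≠ 0) (hdeg : Q.natDegree < M)
    (hQ : ∀ W, W ^ M = U ^ M → Q.eval W = 0) : Q = 0 := by
  refine eq_zero_of_natDegree_lt_card_of_eval_eq_zero' Q
    ((nthRootsFinset M (1 : E)).image (· * U)) (forall_mem_image.2 fun z hz => hQ _ ?_) ?_
  · rw [mul_pow, (mem_nthRootsFinset hM 1).1 hz, one_mul]
  · rwa [card_image_of_injective _ (mul_left_injective₀ hU), hζ.card_nthRootsFinset]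

theorem card_le_of_map_evalRingHom_eq_zero {Q : E[X][X]} {d : ℕ} {T : Finset E} (hQ : Q ≠ 0)
    (hd : ∀ i, (Q.coeff i).natDegree ≤ d) (hT : ∀ V ∈ T, Q.map (evalRingHom V) = 0) :
    #T ≤ d := by
  obtain ⟨i, hi⟩ : ∃ i, Q.coeff i ≠ 0 := by
    by_contra! hcoeff
    exact hQ (Polynomial.ext hcoeff)
  refine le_trans (le_of_not_gt fun hlt => hi ?_) (hd i)
  refine eq_zero_of_natDegree_lt_card_of_eval_eq_zero' _ T (fun V hV => ?_) hlt
  simpa using congrArg (fun g => g.coeff i) (hT V hV)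

theorem add_mul_lt_mul_succ {i j : ℕ} (hi : i < M) (hj : j < M) (r : ℕ) :
    i + j * r < M * (r + 1) := by
  have := Nat.mul_le_mul_right r hj.le
  rw [mul_add_one]
  omega

theorem exists_ne_zero_eval₂_sparsePolynomial_eq_zero [Fintype E] {N D : E[X]}
    {δ l m p r σ : ℕ} [Fact p.Prime] [CharP E p] (hcard : Fintype.card E = r * p ^ σ) (hM : 0 < M)
    (hN : N.natDegree ≤ δ) (hD : D.natDegree ≤ δ)
    (hdim : M * ((l + δ) * p ^ σ + m) < (l * M) * (m * M)) :
    ∃ γ : (Fin l × Fin M) × (Fin m × Fin M) → E, γ ≠ 0 ∧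
      ∀ V U, D.eval V ≠ 0 → D.eval V * U ^ M = N.eval V →
        (sparsePolynomial (fun x => x.1.1 + x.2.1 * r) (fun x => x.1.2 + x.2.2 * r) γ).eval₂
          (aeval V : E[X] →ₐ[E] E) U = 0 := by
  have hs : p ^ σ ≠ 0 := pow_ne_zero _ (Fact.out : p.Prime).ne_zero
  have hβ : ∀ x : (Fin l × Fin M) × (Fin m × Fin M),
      (x.1.2 * p ^ σ + x.2.2 : ℕ) < M * (p ^ σ + 1) := fun x =>
    add_comm (x.2.2 : ℕ) _ ▸ add_mul_lt_mul_succ x.2.2.2 x.1.2.2 _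
  obtain ⟨γ', hγ'0, hγ'⟩ := exists_ne_zero_kummerReduce_sparsePolynomial_eq_zero
    (ι := (Fin l × Fin M) × (Fin m × Fin M)) (N := N) (D := D) (δ := δ) (e := p ^ σ)
    (a := l * p ^ σ + m) hM hN hD
    (α := fun x => x.1.1 * p ^ σ + x.2.1)
    (fun x => add_lt_add_of_le_of_lt (Nat.mul_le_mul_right _ x.1.1.2.le) x.2.1.2) hβ
    (by simpa [add_mul, add_right_comm, mul_comm δ] using hdim)
  choose γ hγ using fun x => (bijective_iterateFrobenius E p σ).2 (γ' x)
  have hγγ' : γ ^ p ^ σ = γ' := funext fun x => by rw [← hγ, iterateFrobenius_def, Pi.pow_apply]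
  refine ⟨γ, fun h0 => hγ'0 (by rw [← hγγ', h0, zero_pow hs]), fun V U hDV hVU => ?_⟩
  rw [← pow_eq_zero_iff hs, eval₂_sparsePolynomial_pow hcard, hγγ']
  have hreduce := congrArg (eval₂ (aeval V : E[X] →ₐ[E] E) U) hγ'
  rw [eval₂_kummerReduce (natDegree_sparsePolynomial_lt (by positivity) hβ γ') _ hVU,
    eval₂_zero] at hreduce
  exact (mul_eq_zero.1 hreduce).resolve_left (pow_ne_zero (p ^ σ) hDV)

theorem kummerReduce_sparsePolynomial_ne_zero {N D : E[X]} {δ l m p ν : ℕ} {V U : E}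
    [Fact p.Prime] [CharP E p] [PerfectRing E p] (hM : (M : E) ≠ 0)
    (hf : Irreducible (kummerPolynomial N D M)) (hN : N.natDegree ≤ δ) (hD : D.natDegree ≤ δ)
    (hr : M * (l + δ) < p ^ ν) (hDV : D.eval V ≠ 0) (hU : U ≠ 0)
    (hVU : D.eval V * U ^ M = N.eval V) {γ : (Fin l × Fin M) × (Fin m × Fin M) → E}
    (hγ : γ ≠ 0) :
    kummerReduce N D M (p ^ ν) (sparsePolynomial (fun x => x.1.1 + x.2.1 * p ^ ν)
      (fun x => x.1.2 + x.2.2 * p ^ ν) γ) ≠ 0 := by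
  have hM' : 0 < M := Nat.pos_of_ne_zero fun h => hM (by rw [h, Nat.cast_zero])
  have hD0 : D ≠ 0 := fun h => hDV (by rw [h, eval_zero])
  obtain ⟨u, hu⟩ := exists_taylorSeries_mul_pow_eq hM hDV hU hVU
  have hindep := linearIndependent_taylorSeries_X_pow_mul_pow (m := m) hf
    (by rw [eval₂_kummerPolynomial]; exact sub_eq_zero.2 hu)
    (natDegree_eq_of_degree_eq_some (degree_kummerPolynomial hM' hD0)) hM'
    (natDegree_coeff_kummerPolynomial_le hN hD) hr
  intro hzero
  have hreduce := congrArg (eval₂ (taylorSeries V : E[X] →+* E⟦X⟧) u) hzero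
  rw [eval₂_kummerReduce (natDegree_sparsePolynomial_lt (by positivity)
    (fun x => add_mul_lt_mul_succ x.1.2.2 x.2.2.2 _) γ) (taylorSeries V : E[X] →+* E⟦X⟧) hu,
    eval₂_zero, eval₂_sparsePolynomial] at hreduce
  have hDseries : taylorSeries V D ≠ 0 := fun h => hDV (by
    rw [← constantCoeff_taylorSeries, h, map_zero])
  refine hγ (funext (Fintype.linearIndependent_iff.1 hindep γ ?_))
  exact (mul_eq_zero.1 hreduce).resolve_left (pow_ne_zero _ hDseries)

theorem card_kummer_fibres_le [Fintype E] {N D : E[X]} {δ l m p ν σ : ℕ} {ζ : E}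
    [Fact p.Prime] [CharP E p] (hcard : Fintype.card E = p ^ ν * p ^ σ) (hM : 0 < M)
    (hζ : IsPrimitiveRoot ζ M) (hf : Irreducible (kummerPolynomial N D M))
    (hN : N.natDegree ≤ δ) (hD : D.natDegree ≤ δ) (hr : M * (l + δ) < p ^ ν)
    (hdim : M * ((l + δ) * p ^ σ + m) < (l * M) * (m * M)) {T : Finset E}
    (hT : ∀ V ∈ T, D.eval V ≠ 0 ∧ ∃ U ≠ 0, D.eval V * U ^ M = N.eval V) :
    #T ≤ l + (m + δ) * p ^ ν := by
  rcases T.eq_empty_or_nonempty with rfl | ⟨V₀, hV₀⟩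
  · simp
  obtain ⟨hDV₀, U₀, hU₀, hVU₀⟩ := hT V₀ hV₀
  have : NeZero M := ⟨hM.ne'⟩
  obtain ⟨γ, hγ, hvanish⟩ := exists_ne_zero_eval₂_sparsePolynomial_eq_zero hcard hM hN hD hdim
  have hdeg := natDegree_sparsePolynomial_lt
    (α := fun x : (Fin l × Fin M) × (Fin m × Fin M) => x.1.1 + x.2.1 * p ^ ν)
    (β := fun x => x.1.2 + x.2.2 * p ^ ν) (by positivity)
    (fun x => add_mul_lt_mul_succ x.1.2.2 x.2.2.2 _) γ
  have hα : ∀ x : (Fin l × Fin M) × (Fin m × Fin M),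
      (x.1.1 + x.2.1 * p ^ ν : ℕ) ≤ l + m * p ^ ν :=
    fun x => add_le_add x.1.1.2.le (Nat.mul_le_mul_right _ x.2.1.2.le)
  refine (card_le_of_map_evalRingHom_eq_zero (kummerReduce_sparsePolynomial_ne_zero
    hζ.neZero'.out hf hN hD hr hDV₀ hU₀ hVU₀ hγ) (natDegree_coeff_kummerReduce_le hN hD hdeg
      (natDegree_coeff_sparsePolynomial_le hα γ)) fun V hV => ?_).trans_eq (by ring)
  obtain ⟨hDV, U, hU, hVU⟩ := hT V hV
  refine eq_zero_of_forall_pow_eq_pow hM hζ hU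
    (natDegree_map_le.trans_lt (natDegree_kummerReduce_lt hM _ _ _ _)) fun W hW => ?_
  rw [← hW] at hVU
  rw [eval_map, eval₂_kummerReduce hdeg _ hVU]
  exact mul_eq_zero_of_right _ (hvanish V W hDV hVU)

-- `l` is essentially the largest value allowed by the independence condition `M * (l + δ) < r`,
-- and `m` is then just large enough for the dimension count.
theorem exists_stepanov_parameters {δ r s : ℕ} (hM : 0 < M) (hsr : s ≤ r)
    (hr : 2 * δ + 4 ≤ r / M) :
    ∃ l m, M * (l + δ) < r ∧ M * ((l + δ) * s + m) < (l * M) * (m * M) ∧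
      M * (l + (m + δ) * r) ≤ r * s + M * (3 * δ + 8) * r := by
  have hrM : r < M * (r / M + 1) := Nat.lt_mul_div_succ _ hM
  have hrM' : M * (r / M) ≤ r := Nat.mul_div_le _ _
  have hsM : s < M * (s / M + 1) := Nat.lt_mul_div_succ _ hM
  have hsM' : M * (s / M) ≤ s := Nat.mul_div_le _ _
  have hss : s / M ≤ s := Nat.div_le_self _ _
  obtain ⟨l, hl⟩ : ∃ l, r / M = l + δ + 1 := ⟨r / M - (δ + 1), by omega⟩
  rw [hl] at hrM hrM' hr
  have hr2l : r ≤ 2 * (M * l) := by nlinarith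
  have hlr : l ≤ r := by nlinarith
  refine ⟨l, s / M + 2 * δ + 7, by nlinarith, ?_, ?_⟩
  · have hdim : (l + δ) * s + (s / M + 2 * δ + 7) < l * ((s / M + 2 * δ + 7) * M) := by
      have hls : l * s ≤ l * (M * (s / M + 1)) := Nat.mul_le_mul_left _ hsM.le
      have hδs : δ * s ≤ δ * r := Nat.mul_le_mul_left _ hsr
      have hδr : (δ + 3) * r ≤ (δ + 3) * (2 * (M * l)) := Nat.mul_le_mul_left _ hr2l
      nlinarith
    calc _ < M * (l * ((s / M + 2 * δ + 7) * M)) := Nat.mul_lt_mul_of_pos_left hdim hM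
      _ = _ := by ring
  · calc M * (l + (s / M + 2 * δ + 7 + δ) * r)
        = M * (s / M) * r + M * (l + (3 * δ + 7) * r) := by ring
      _ ≤ s * r + M * (r + (3 * δ + 7) * r) := by gcongr
      _ = _ := by ring

theorem mul_card_kummer_fibres_le [Fintype E] {N D : E[X]} {δ p ν σ : ℕ} {ζ : E} [Fact p.Prime]
    [CharP E p] (hcard : Fintype.card E = p ^ ν * p ^ σ) (hσν : σ ≤ ν) (hM : 0 < M)
    (hζ : IsPrimitiveRoot ζ M) (hf : Irreducible (kummerPolynomial N D M))
    (hN : N.natDegree ≤ δ) (hD : D.natDegree ≤ δ) {T : Finset E}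
    (hT : ∀ V ∈ T, D.eval V ≠ 0 ∧ ∃ U ≠ 0, D.eval V * U ^ M = N.eval V) :
    M * #T ≤ Fintype.card E + M * (3 * δ + 8 + M * (2 * δ + 4)) * p ^ ν := by
  have hsr : p ^ σ ≤ p ^ ν := Nat.pow_le_pow_right (Fact.out : p.Prime).pos hσν
  rcases lt_or_ge (p ^ ν / M) (2 * δ + 4) with hsmall | hlarge
  · have hr : p ^ ν ≤ M * (2 * δ + 4) :=
      (Nat.lt_mul_div_succ _ hM).le.trans (Nat.mul_le_mul_left _ hsmall)
    calc M * #T ≤ M * (p ^ σ * p ^ ν) :=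
          Nat.mul_le_mul_left _ (mul_comm (p ^ ν) _ ▸ hcard ▸ card_le_univ T)
      _ ≤ M * (3 * δ + 8 + M * (2 * δ + 4)) * p ^ ν := by
          rw [mul_assoc]; gcongr; omega
      _ ≤ _ := Nat.le_add_left _ _
  · obtain ⟨l, m, hindep, hdim, hbound⟩ := exists_stepanov_parameters hM hsr hlarge
    calc M * #T ≤ M * (l + (m + δ) * p ^ ν) :=
          Nat.mul_le_mul_left _ (card_kummer_fibres_le hcard hM hζ hf hN hD hindep hdim hT)
      _ ≤ p ^ ν * p ^ σ + M * (3 * δ + 8) * p ^ ν := hbound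
      _ ≤ _ := hcard ▸ Nat.add_le_add_left
          (Nat.mul_le_mul_right _ (Nat.mul_le_mul_left _ (Nat.le_add_right _ _))) _

end Stepanov

section KummerCount

open Polynomial

variable {E : Type*} [Field E] {M : ℕ} {a₁ a₂ a₃ a₄ c e : E}

/-- The numerator of `x - θ` as a function of `t`, when `θ` is the Möbius function of `t ^ M`
determined by `a₁ - θ = c * t ^ M * (a₂ - θ)`; the denominator is `1 - c * t ^ M`. -/
noncomputable def shiftNumerator (M : ℕ) (c a₁ a₂ x : E) : E[X] :=
  C (x - a₁) - C (c * (x - a₂)) * X ^ M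

theorem eval_shiftNumerator {t θ : E} (x : E) (h : a₁ - θ = c * t ^ M * (a₂ - θ)) :
    (shiftNumerator M c a₁ a₂ x).eval t = (x - θ) * (1 - c * t ^ M) := by
  simp only [shiftNumerator, eval_sub, eval_mul, eval_C, eval_pow, eval_X]
  linear_combination (-1) * h

theorem natDegree_shiftNumerator_le (x : E) : (shiftNumerator M c a₁ a₂ x).natDegree ≤ M :=
  (natDegree_sub_le_of_le ((natDegree_C _).trans_le M.zero_le)
    (natDegree_C_mul_X_pow_le _ _)).trans_eq (max_self M)

theorem isCoprime_shiftNumerator (hc : c ≠ 0) (he : e ≠ 0) (h₁₂ : a₁ ≠ a₂) (h₃₄ : a₃ ≠ a₄) :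
    IsCoprime (shiftNumerator M c a₁ a₂ a₃) (C e * shiftNumerator M c a₁ a₂ a₄) := by
  obtain ⟨k, hk⟩ : ∃ k, k * (c * e * ((a₁ - a₂) * (a₃ - a₄))) = 1 := ⟨_, inv_mul_cancel₀
    (mul_ne_zero (mul_ne_zero hc he) (mul_ne_zero (sub_ne_zero.2 h₁₂) (sub_ne_zero.2 h₃₄)))⟩
  refine ⟨C (k * (e * (c * (a₄ - a₂)))), C (k * -(c * (a₃ - a₂))), ?_⟩
  rw [← C_1, ← hk]
  simp only [shiftNumerator, C_mul, C_sub, C_neg]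
  ring

theorem squarefree_shiftNumerator (hME : (M : E) ≠ 0) (hc : c ≠ 0) (h₁₃ : a₁ ≠ a₃)
    (h₂₃ : a₂ ≠ a₃) : Squarefree (shiftNumerator M c a₁ a₂ a₃) := by
  have hlead : c * (a₃ - a₂) ≠ 0 := mul_ne_zero hc (sub_ne_zero.2 h₂₃.symm)
  have hroot : (a₃ - a₁) / (c * (a₃ - a₂)) ≠ 0 := div_ne_zero (sub_ne_zero.2 h₁₃.symm) hlead
  have hfactor : shiftNumerator M c a₁ a₂ a₃ =
      C (-(c * (a₃ - a₂))) * (X ^ M - C ((a₃ - a₁) / (c * (a₃ - a₂)))) := by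
    rw [mul_sub, ← C_mul, neg_mul, mul_div_cancel₀ _ hlead, shiftNumerator, C_neg, C_neg]
    ring
  rw [hfactor]
  exact ((separable_X_pow_sub_C _ hME hroot).unit_mul
    (isUnit_C.2 (neg_ne_zero.2 hlead).isUnit)).squarefree

theorem natDegree_shiftNumerator (hM : 0 < M) (hc : c ≠ 0) (h₂₃ : a₂ ≠ a₃) :
    (shiftNumerator M c a₁ a₂ a₃).natDegree = M := by
  have hlead : (C (c * (a₃ - a₂)) * X ^ M : E[X]).natDegree = M :=
    natDegree_C_mul_X_pow _ _ (mul_ne_zero hc (sub_ne_zero.2 h₂₃.symm))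
  rw [shiftNumerator, natDegree_sub_eq_right_of_natDegree_lt, hlead]
  rwa [hlead, natDegree_C]

theorem irreducible_kummerPolynomial_shiftNumerator (hM : 0 < M) (hME : (M : E) ≠ 0)
    (hc : c ≠ 0) (he : e ≠ 0) (h₁₂ : a₁ ≠ a₂) (h₁₃ : a₁ ≠ a₃) (h₂₃ : a₂ ≠ a₃)
    (h₃₄ : a₃ ≠ a₄) :
    Irreducible (kummerPolynomial (shiftNumerator M c a₁ a₂ a₃)
      (C e * shiftNumerator M c a₁ a₂ a₄) M) := by
  obtain ⟨π, hπ, hdvd⟩ := exists_irreducible_of_natDegree_pos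
    (hM.trans_eq (natDegree_shiftNumerator (a₁ := a₁) hM hc h₂₃).symm)
  refine irreducible_kummerPolynomial hM (isCoprime_shiftNumerator hc he h₁₂ h₃₄) hπ.prime hdvd
    fun hsq => hπ.not_isUnit ?_
  exact squarefree_shiftNumerator hME hc h₁₃ h₂₃ π (sq π ▸ hsq)

theorem one_sub_ne_zero_of_sub_eq {u θ : E} (h₁₂ : a₁ ≠ a₂) (h : a₁ - θ = u * (a₂ - θ)) :
    1 - u ≠ 0 :=
  fun hu => h₁₂ (by linear_combination h - (a₂ - θ) * hu)

theorem exists_card_eq_mul_card_of_pow_parametrisation {ζ : E} (hM : 0 < M)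
    (hζ : IsPrimitiveRoot ζ M) (h₁₂ : a₁ ≠ a₂) {Θ : Finset E}
    (hΘ : ∀ θ ∈ Θ, ∃ t ≠ 0, a₁ - θ = c * t ^ M * (a₂ - θ)) :
    ∃ T : Finset E, #T = M * #Θ ∧ ∀ V ∈ T, ∃ θ ∈ Θ, a₁ - θ = c * V ^ M * (a₂ - θ) := by
  choose! t ht₀ ht using hΘ
  have hpow : ∀ θ, ∀ z ∈ nthRootsFinset M (1 : E), (t θ * z) ^ M = t θ ^ M := by
    intro θ z hz
    rw [mul_pow, (mem_nthRootsFinset hM _).1 hz, mul_one]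
  refine ⟨(Θ ×ˢ nthRootsFinset M (1 : E)).image fun x => t x.1 * x.2, ?_, ?_⟩
  · rw [card_image_of_injOn, card_product, hζ.card_nthRootsFinset, mul_comm]
    rintro ⟨θ, z⟩ hθz ⟨θ', z'⟩ hθz' (heq : t θ * z = t θ' * z')
    obtain ⟨hθ, hz⟩ := mem_product.1 hθz
    obtain ⟨hθ', hz'⟩ := mem_product.1 hθz'
    have htt : t θ ^ M = t θ' ^ M := by rw [← hpow θ z hz, heq, hpow θ' z' hz']
    have hmul : (1 - c * t θ' ^ M) * (θ - θ') = 0 := by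
      linear_combination ht θ' hθ' - ht θ hθ - c * (a₂ - θ) * htt
    obtain rfl : θ = θ' := sub_eq_zero.1
      ((mul_eq_zero.1 hmul).resolve_left (one_sub_ne_zero_of_sub_eq h₁₂ (ht θ' hθ')))
    exact Prod.ext rfl (mul_left_cancel₀ (ht₀ θ hθ) heq)
  · intro V hV
    obtain ⟨⟨θ, z⟩, hθz, rfl⟩ := mem_image.1 hV
    obtain ⟨hθ, hz⟩ := mem_product.1 hθz
    exact ⟨θ, hθ, by rw [hpow θ z hz, ← ht θ hθ]⟩

theorem mul_card_pow_parametrised_le [Fintype E] {p ν σ : ℕ} {ζ : E} [Fact p.Prime] [CharP E p]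
    (hcard : Fintype.card E = p ^ ν * p ^ σ) (hσν : σ ≤ ν) (hM : 0 < M)
    (hζ : IsPrimitiveRoot ζ M) (hc : c ≠ 0) (he : e ≠ 0) (h₁₂ : a₁ ≠ a₂) (h₁₃ : a₁ ≠ a₃)
    (h₂₃ : a₂ ≠ a₃) (h₃₄ : a₃ ≠ a₄) {Θ : Finset E}
    (hΘ₁ : ∀ θ ∈ Θ, ∃ t ≠ 0, a₁ - θ = c * t ^ M * (a₂ - θ))
    (hΘ₂ : ∀ θ ∈ Θ, ∃ t ≠ 0, a₃ - θ = e * t ^ M * (a₄ - θ)) :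
    M * M * #Θ ≤ Fintype.card E + M * (3 * M + 8 + M * (2 * M + 4)) * p ^ ν := by
  have : NeZero M := ⟨hM.ne'⟩
  obtain ⟨T, hTcard, hT⟩ := exists_card_eq_mul_card_of_pow_parametrisation hM hζ h₁₂ hΘ₁
  rw [mul_assoc, ← hTcard]
  refine mul_card_kummer_fibres_le hcard hσν hM hζ
    (irreducible_kummerPolynomial_shiftNumerator hM hζ.neZero'.out hc he h₁₂ h₁₃ h₂₃ h₃₄)
    (natDegree_shiftNumerator_le _)
    ((natDegree_C_mul_le _ _).trans (natDegree_shiftNumerator_le _)) fun V hV => ?_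
  obtain ⟨θ, hθ, hVθ⟩ := hT V hV
  obtain ⟨U, hU, hUθ⟩ := hΘ₂ θ hθ
  have hθ₄ : a₄ - θ ≠ 0 := fun h => h₃₄ (by linear_combination hUθ + (e * U ^ M - 1) * h)
  rw [eval_mul, eval_C, eval_shiftNumerator _ hVθ, eval_shiftNumerator _ hVθ, hUθ]
  exact ⟨mul_ne_zero he (mul_ne_zero hθ₄ (one_sub_ne_zero_of_sub_eq h₁₂ hVθ)), U, hU, by ring⟩

end KummerCount

section PowerClass

variable {E : Type*} [Field E] {M : ℕ}

theorem norm_sum_comp_le_of_card_fiber_le {α V : Type*} [Fintype V] [Nonempty V] {f : V → ℂ}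
    (hf : ∀ v, ‖f v‖ ≤ 1) (hf₀ : ∑ v, f v = 0) (T : Finset α) (π : α → V) {B : ℕ}
    (hB : ∀ v, Fintype.card V * #{θ ∈ T | π θ = v} ≤ B) : ‖∑ θ ∈ T, f (π θ)‖ ≤ B - #T := by
  have hcard : (0 : ℝ) < Fintype.card V := Nat.cast_pos.2 Fintype.card_pos
  have hfibre : ∀ v, (#{θ ∈ T | π θ = v} : ℝ) ≤ B / Fintype.card V := fun v =>
    (le_div_iff₀' hcard).2 (mod_cast hB v)
  have hsum : ∑ θ ∈ T, f (π θ) =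
      ∑ v, f v * ((#{θ ∈ T | π θ = v} - B / Fintype.card V : ℝ) : ℂ) := by
    simp only [Complex.ofReal_sub, mul_sub, sum_sub_distrib, ← sum_mul, hf₀, zero_mul, sub_zero]
    rw [← sum_fiberwise T π]
    refine sum_congr rfl fun v _ => ?_
    rw [sum_congr rfl fun θ hθ => congrArg f (mem_filter.1 hθ).2, sum_const, nsmul_eq_mul,
      mul_comm, Complex.ofReal_natCast]
  calc ‖∑ θ ∈ T, f (π θ)‖ ≤ ∑ v, (B / Fintype.card V - #{θ ∈ T | π θ = v} : ℝ) := by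
        rw [hsum]
        refine norm_sum_le_of_le _ fun v _ => ?_
        rw [norm_mul, Complex.norm_real, Real.norm_eq_abs, abs_of_nonpos (by linarith [hfibre v]),
          neg_sub]
        exact mul_le_of_le_one_left (by linarith [hfibre v]) (hf v)
    _ = B - #T := by
        rw [sum_sub_distrib, sum_const, nsmul_eq_mul, card_univ, mul_div_cancel₀ _ hcard.ne',
          ← Nat.cast_sum, card_eq_sum_card_fiberwise (f := π) fun _ _ => mem_coe.2 (mem_univ _)]

/-- The group `Eˣ / (Eˣ) ^ M` of classes modulo `M`-th powers. -/
abbrev PowerClassGroup (E : Type*) [Field E] (M : ℕ) : Type _ :=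
  Eˣ ⧸ (powMonoidHom M : Eˣ →* Eˣ).range

/-- The class of `x` modulo `M`-th powers, with the junk value `1` at `x = 0`. -/
noncomputable def powerClass (M : ℕ) (x : E) : PowerClassGroup E M :=
  if hx : x = 0 then 1 else (Units.mk0 x hx : Eˣ)

theorem exists_eq_mul_pow_of_powerClass_eq {x y : E} (hx : x ≠ 0) (hy : y ≠ 0)
    (h : powerClass M x = powerClass M y) : ∃ t ≠ 0, x = y * t ^ M := by
  rw [powerClass, powerClass, dif_neg hx, dif_neg hy, eq_comm, QuotientGroup.eq] at h
  obtain ⟨t, ht⟩ := h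
  have htM : (t : E) ^ M = y⁻¹ * x := by simpa using congrArg Units.val ht
  exact ⟨t, t.ne_zero, by rw [htM, mul_inv_cancel_left₀ hy]⟩

theorem exists_eq_comp_powerClass {χ : MulChar E ℂ} (hχ : χ ^ M = 1) :
    ∃ φ : PowerClassGroup E M →* ℂ, ∀ x ≠ 0, χ x = φ (powerClass M x) := by
  refine ⟨(Units.coeHom ℂ).comp (QuotientGroup.lift _ χ.toUnitHom ?_), fun x hx => ?_⟩
  · rintro _ ⟨t, rfl⟩
    ext
    rw [powMonoidHom_apply, map_pow, Units.val_pow_eq_pow_val, MulChar.coe_toUnitHom,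
      ← MulChar.pow_apply_coe, hχ, MulChar.one_apply_coe, Units.val_one]
  · rw [powerClass, dif_neg hx, MonoidHom.comp_apply, QuotientGroup.lift_mk]
    exact (MulChar.coe_toUnitHom χ (Units.mk0 x hx)).symm

theorem exists_isPrimitiveRoot_of_dvd_card_sub_one [Fintype E] (hM : M ∣ Fintype.card E - 1) :
    ∃ ζ : E, IsPrimitiveRoot ζ M := by
  obtain ⟨g, hg⟩ := IsCyclic.exists_ofOrder_eq_natCard (α := Eˣ)
  obtain ⟨m, hm⟩ := hM
  have hcard : orderOf g = m * M := by
    rw [hg, Nat.card_units, Nat.card_eq_fintype_card, hm, mul_comm]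
  refine ⟨g ^ m, ?_⟩
  rw [← Units.val_pow_eq_pow_val, IsPrimitiveRoot.coe_units_iff]
  exact (IsPrimitiveRoot.orderOf g).pow (orderOf_pos g) hcard

theorem card_powerClassGroup [Fintype E] (hM : M ∣ Fintype.card E - 1) :
    Nat.card (PowerClassGroup E M) = M := by
  rw [PowerClassGroup, ← Subgroup.index, IsCyclic.index_powMonoidHom_range, Nat.card_units,
    Nat.card_eq_fintype_card]
  exact Nat.gcd_eq_right hM

theorem norm_apply_eq_one_of_finite {G : Type*} [Group G] [Finite G] (φ : G →* ℂ) (v : G) :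
    ‖φ v‖ = 1 := by
  refine Complex.norm_eq_one_of_pow_eq_one (n := Nat.card G) ?_ Nat.card_pos.ne'
  rw [← map_pow, pow_card_eq_one', map_one]

theorem norm_sum_mulChar_mul_mulChar_le {ι : Type*} [Fintype ι] [Fintype E]
    (hM : M ∣ Fintype.card E - 1) {χ ψ : MulChar E ℂ} (hχ : χ ≠ 1) (hχM : χ ^ M = 1)
    (hψM : ψ ^ M = 1) (f g : ι → E) {B : ℕ}
    (hB : ∀ v w, M * M * #{i | (f i ≠ 0 ∧ g i ≠ 0) ∧
      powerClass M (f i) = v ∧ powerClass M (g i) = w} ≤ B) :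
    ‖∑ i, χ (f i) * ψ (g i)‖ ≤ B - #{i | f i ≠ 0 ∧ g i ≠ 0} := by
  obtain ⟨φ, hφ⟩ := exists_eq_comp_powerClass hχM
  obtain ⟨φ', hφ'⟩ := exists_eq_comp_powerClass hψM
  have hφ₁ : φ ≠ 1 := fun h => hχ (MulChar.ext fun u => by
    rw [hφ u u.ne_zero, h, MonoidHom.one_apply, MulChar.one_apply_coe])
  have hφ₀ : ∑ v : PowerClassGroup E M × PowerClassGroup E M, φ v.1 * φ' v.2 = 0 := by
    simp only [Fintype.sum_prod_type, ← mul_sum, ← sum_mul, sum_hom_units_eq_zero φ hφ₁, zero_mul]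
  have hsum : ∑ i, χ (f i) * ψ (g i) =
      ∑ i with f i ≠ 0 ∧ g i ≠ 0, φ (powerClass M (f i)) * φ' (powerClass M (g i)) := by
    rw [sum_filter]
    refine sum_congr rfl fun i _ => ?_
    split_ifs with hi
    · rw [hφ _ hi.1, hφ' _ hi.2]
    · rw [not_and_or, not_not, not_not] at hi
      rcases hi with h | h
      · rw [h, MulChar.map_zero, zero_mul]
      · rw [h, MulChar.map_zero, mul_zero]
  have hnorm : ∀ v : PowerClassGroup E M × PowerClassGroup E M, ‖φ v.1 * φ' v.2‖ ≤ 1 := fun v => by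
    rw [norm_mul, norm_apply_eq_one_of_finite, norm_apply_eq_one_of_finite, one_mul]
  rw [hsum]
  refine norm_sum_comp_le_of_card_fiber_le hnorm hφ₀ _
    (fun i => (powerClass M (f i), powerClass M (g i))) fun v => ?_
  rw [Fintype.card_prod, ← Nat.card_eq_fintype_card, card_powerClassGroup hM, filter_filter]
  simpa only [Prod.ext_iff] using hB v.1 v.2

variable [Fintype E] {p ν σ : ℕ} [Fact p.Prime] [CharP E p] {a₁ a₂ a₃ a₄ : E}

theorem mul_card_powerClass_fibre_le (hcard : Fintype.card E = p ^ ν * p ^ σ) (hσν : σ ≤ ν)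
    (hM : 0 < M) (hMdvd : M ∣ Fintype.card E - 1) (h₁₂ : a₁ ≠ a₂) (h₁₃ : a₁ ≠ a₃)
    (h₂₃ : a₂ ≠ a₃) (h₃₄ : a₃ ≠ a₄)
    (v w : PowerClassGroup E M) {Θ : Finset E}
    (hΘ₁ : ∀ θ ∈ Θ, (a₁ - θ) / (a₂ - θ) ≠ 0) (hΘ₂ : ∀ θ ∈ Θ, (a₃ - θ) / (a₄ - θ) ≠ 0)
    (hv : ∀ θ ∈ Θ, powerClass M ((a₁ - θ) / (a₂ - θ)) = v)
    (hw : ∀ θ ∈ Θ, powerClass M ((a₃ - θ) / (a₄ - θ)) = w) :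
    M * M * #Θ ≤ Fintype.card E + M * (3 * M + 8 + M * (2 * M + 4)) * p ^ ν := by
  obtain rfl | ⟨θ₀, hθ₀⟩ := Θ.eq_empty_or_nonempty
  · simp
  obtain ⟨ζ, hζ⟩ := exists_isPrimitiveRoot_of_dvd_card_sub_one hMdvd
  refine mul_card_pow_parametrised_le hcard hσν hM hζ (hΘ₁ θ₀ hθ₀) (hΘ₂ θ₀ hθ₀) h₁₂ h₁₃ h₂₃ h₃₄
    (fun θ hθ => ?_) (fun θ hθ => ?_)
  · obtain ⟨t, ht₀, ht⟩ := exists_eq_mul_pow_of_powerClass_eq (hΘ₁ θ hθ) (hΘ₁ θ₀ hθ₀)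
      ((hv θ hθ).trans (hv θ₀ hθ₀).symm)
    exact ⟨t, ht₀, by rw [← ht, div_mul_cancel₀ _ (div_ne_zero_iff.1 (hΘ₁ θ hθ)).2]⟩
  · obtain ⟨t, ht₀, ht⟩ := exists_eq_mul_pow_of_powerClass_eq (hΘ₂ θ hθ) (hΘ₂ θ₀ hθ₀)
      ((hw θ hθ).trans (hw θ₀ hθ₀).symm)
    exact ⟨t, ht₀, by rw [← ht, div_mul_cancel₀ _ (div_ne_zero_iff.1 (hΘ₂ θ hθ)).2]⟩

theorem card_le_card_filter_div_ne_zero_add_four (a₁ a₂ a₃ a₄ : E) :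
    Fintype.card E ≤ #{θ | (a₁ - θ) / (a₂ - θ) ≠ 0 ∧ (a₃ - θ) / (a₄ - θ) ≠ 0} + 4 := by
  rw [← card_univ, ← card_filter_add_card_filter_not (s := univ)
    fun θ => (a₁ - θ) / (a₂ - θ) ≠ 0 ∧ (a₃ - θ) / (a₄ - θ) ≠ 0]
  refine Nat.add_le_add_left ((card_le_card fun θ hθ => ?_).trans
    (card_le_four (a := a₁) (b := a₂) (c := a₃) (d := a₄))) _
  simp only [mem_filter_univ, div_ne_zero_iff, sub_ne_zero] at hθ
  simp only [mem_insert, mem_singleton]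
  tauto

theorem norm_sum_mulChar_div_le (hcard : Fintype.card E = p ^ ν * p ^ σ) (hσν : σ ≤ ν)
    (hM : 0 < M) (hMdvd : M ∣ Fintype.card E - 1) (h₁₂ : a₁ ≠ a₂) (h₁₃ : a₁ ≠ a₃)
    (h₂₃ : a₂ ≠ a₃) (h₃₄ : a₃ ≠ a₄) {χ ψ : MulChar E ℂ} (hχ : χ ≠ 1) (hχM : χ ^ M = 1)
    (hψM : ψ ^ M = 1) :
    ‖∑ θ, χ ((a₁ - θ) / (a₂ - θ)) * ψ ((a₃ - θ) / (a₄ - θ))‖ ≤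
      M * (3 * M + 8 + M * (2 * M + 4)) * p ^ ν + 4 := by
  have hfibre := norm_sum_mulChar_mul_mulChar_le hMdvd hχ hχM hψM
    (fun θ => (a₁ - θ) / (a₂ - θ)) (fun θ => (a₃ - θ) / (a₄ - θ)) fun v w =>
      mul_card_powerClass_fibre_le hcard hσν hM hMdvd h₁₂ h₁₃ h₂₃ h₃₄ v w
        (fun θ hθ => ((mem_filter_univ θ).1 hθ).1.1) (fun θ hθ => ((mem_filter_univ θ).1 hθ).1.2)
        (fun θ hθ => ((mem_filter_univ θ).1 hθ).2.1) fun θ hθ => ((mem_filter_univ θ).1 hθ).2.2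
  have hexcept := Nat.cast_le (α := ℝ).2 (card_le_card_filter_div_ne_zero_add_four a₁ a₂ a₃ a₄)
  push_cast at hfibre hexcept
  linarith

end PowerClass

section LogarithmicDerivative

open Polynomial

theorem hasSum_coeff_coe_mul {R : Type*} [CommRing R] [TopologicalSpace R] [IsTopologicalRing R]
    {σ : PowerSeries R} {t s : R} (h : HasSum (fun n => PowerSeries.coeff n σ * t ^ n) s)
    (P : R[X]) :
    HasSum (fun n => PowerSeries.coeff n ((P : PowerSeries R) * σ) * t ^ n) (P.eval t * s) := by
  induction P using Polynomial.induction_on with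
  | C a => simpa [mul_assoc] using h.mul_left a
  | add P Q hP hQ => simpa [add_mul] using hP.add hQ
  | monomial k a hk =>
    have hX : ((C a * X ^ (k + 1) : R[X]) : PowerSeries R) * σ =
        PowerSeries.X * (((C a * X ^ k : R[X]) : PowerSeries R) * σ) := by
      push_cast
      ring
    have hshift := hk.mul_left t
    simp only [eval_mul, eval_C, eval_pow, eval_X] at hshift ⊢
    rw [← hasSum_nat_add_iff' 1, hX]
    simpa only [sum_range_one, PowerSeries.coeff_zero_X_mul, PowerSeries.coeff_succ_X_mul, zero_mul,
      sub_zero, pow_succ', mul_left_comm, mul_assoc] using hshift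

theorem hasSum_coeff_coe {R : Type*} [CommRing R] [TopologicalSpace R] [IsTopologicalRing R]
    (P : R[X]) (t : R) : HasSum (fun n => P.coeff n * t ^ n) (P.eval t) := by
  have hone : HasSum (fun n => PowerSeries.coeff n (1 : PowerSeries R) * t ^ n) 1 := by
    convert hasSum_single (f := fun n => PowerSeries.coeff n (1 : PowerSeries R) * t ^ n) 0
      fun n hn => by simp [PowerSeries.coeff_one, hn] using 1
    simp
  simpa only [mul_one, coeff_coe] using hasSum_coeff_coe_mul hone P

theorem eval_ne_zero_of_derivative_eq_mul {L : ℂ[X]} {σ : PowerSeries ℂ} {t : ℂ} (hL : L ≠ 0)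
    (hder : (derivative L : PowerSeries ℂ) = L * σ)
    (ht : Summable fun n => PowerSeries.coeff n σ * t ^ n) : L.eval t ≠ 0 := by
  intro hroot
  obtain ⟨R, hR, hRt⟩ := exists_eq_pow_rootMultiplicity_mul_and_not_dvd L hL t
  obtain ⟨m, hm⟩ := Nat.exists_eq_add_one.2 ((rootMultiplicity_pos hL).2 hroot)
  rw [hm] at hR
  have hcancel : ((C (m + 1 : ℂ) * R + (X - C t) * derivative R : ℂ[X]) : PowerSeries ℂ) =
      ((X - C t) * R : ℂ[X]) * σ := by
    have hX : (((X - C t) ^ m : ℂ[X]) : PowerSeries ℂ) ≠ 0 :=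
      (Polynomial.coe_eq_zero_iff).not.2 (pow_ne_zero m (X_sub_C_ne_zero t))
    refine mul_left_cancel₀ hX ?_
    rw [← mul_assoc, ← Polynomial.coe_mul, ← Polynomial.coe_mul, ← mul_assoc, ← pow_succ, ← hR,
      ← hder, hR, derivative_mul, derivative_X_sub_C_pow]
    simp only [Nat.cast_add, Nat.cast_one, add_tsub_cancel_right, pow_succ, Polynomial.coe_add,
      Polynomial.coe_mul]
    ring
  obtain ⟨s, hs⟩ := ht
  have heval := (hasSum_coeff_coe (C (m + 1 : ℂ) * R + (X - C t) * derivative R) t).unique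
    (by simpa only [← coeff_coe, hcancel] using hasSum_coeff_coe_mul hs ((X - C t) * R))
  simp only [eval_add, eval_mul, eval_C, eval_sub, eval_X, sub_self, zero_mul, add_zero] at heval
  exact hRt (dvd_iff_isRoot.2 ((mul_eq_zero.1 heval).resolve_left (Nat.cast_add_one_ne_zero m)))

theorem norm_coeff_zero_le_of_derivative_eq_mul {L : ℂ[X]} {σ : PowerSeries ℂ} {d : ℕ} {B ρ : ℝ}
    (hL : L ≠ 0) (hdeg : L.natDegree ≤ d) (hder : (derivative L : PowerSeries ℂ) = L * σ)
    (hρ : 0 < ρ) (hσ : ∀ n, ‖PowerSeries.coeff n σ‖ ≤ B * ρ ^ n) :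
    ‖PowerSeries.coeff 0 σ‖ ≤ d * ρ := by
  have hne : ∀ t : ℂ, ‖t‖ * ρ < 1 → L.eval t ≠ 0 := by
    intro t ht
    refine eval_ne_zero_of_derivative_eq_mul hL hder (Summable.of_norm_bounded
      (g := fun n => B * (‖t‖ * ρ) ^ n)
      ((summable_geometric_of_lt_one (by positivity) ht).mul_left B) fun n => ?_)
    rw [norm_mul, norm_pow, mul_pow, mul_left_comm, mul_comm]
    gcongr
    exact hσ n
  have hroots : ∀ t ∈ L.roots, ‖1 / (0 - t)‖ ≤ ρ := by
    intro t ht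
    have h := not_lt.1 fun h => hne t h (isRoot_of_mem_roots ht)
    have : 0 < ‖t‖ := by
      by_contra!
      nlinarith
    rw [zero_sub, norm_div, norm_neg, norm_one, div_le_iff₀ this]
    linarith
  have hzero : L.eval 0 ≠ 0 := hne 0 (by simp)
  have hσ₀ : PowerSeries.coeff 0 σ = (L.roots.map fun t => 1 / (0 - t)).sum := by
    rw [← (IsAlgClosed.splits L).eval_derivative_div_eval_of_ne_zero hzero, eq_div_iff hzero,
      ← coeff_zero_eq_eval_zero, ← coeff_zero_eq_eval_zero, ← coeff_coe (derivative L), hder]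
    simp [mul_comm]
  rw [hσ₀]
  calc _ ≤ ((L.roots.map fun t => 1 / (0 - t)).map norm).sum := norm_multiset_sum_le _
    _ ≤ L.roots.card • ρ := by
      simpa only [Multiset.map_map, Multiset.card_map, Function.comp_apply] using
        Multiset.sum_le_card_nsmul (L.roots.map fun t => ‖1 / (0 - t)‖) ρ
          (Multiset.forall_mem_map_iff.2 hroots)
    _ ≤ d * ρ := by
      rw [nsmul_eq_mul]
      gcongr
      exact (card_roots' L).trans hdeg

end LogarithmicDerivative

section MonicPolynomials

open Polynomial

theorem finite_setOf_monic_natDegree_eq (F : Type*) [Field F] [Finite F] (n : ℕ) :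
    {g : F[X] | g.Monic ∧ g.natDegree = n}.Finite :=
  Finite.of_equiv _ ((monicEquivDegreeLT (R := F) n).trans (degreeLTEquiv F n).toEquiv).symm

/-- The monic polynomials of degree `n` over a finite field, indexing the coefficient of degree `n`
of an L-function. -/
noncomputable def monicsOfDegree (F : Type*) [Field F] [Finite F] (n : ℕ) : Finset F[X] :=
  (finite_setOf_monic_natDegree_eq F n).toFinset

theorem mem_monicsOfDegree {F : Type*} [Field F] [Finite F] {n : ℕ} {g : F[X]} :
    g ∈ monicsOfDegree F n ↔ g.Monic ∧ g.natDegree = n := by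
  simp [monicsOfDegree]

theorem monicsOfDegree_zero (F : Type*) [Field F] [Finite F] : monicsOfDegree F 0 = {1} := by
  ext g
  rw [mem_monicsOfDegree, mem_singleton]
  refine ⟨fun ⟨hmonic, hdeg⟩ => hmonic.natDegree_eq_zero.1 hdeg, ?_⟩
  rintro rfl
  exact ⟨monic_one, natDegree_one⟩

theorem monicsOfDegree_one (F : Type*) [Field F] [Fintype F] :
    monicsOfDegree F 1 = univ.image fun s : F => X + C s := by
  ext g
  simp only [mem_monicsOfDegree, mem_image, mem_univ, true_and]
  refine ⟨fun ⟨hmonic, hdeg⟩ => ⟨g.coeff 0, (hmonic.eq_X_add_C hdeg).symm⟩, ?_⟩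
  rintro ⟨s, rfl⟩
  exact ⟨monic_X_add_C s, natDegree_X_add_C s⟩

theorem sum_monicsOfDegree_filter_dvd {F R : Type*} [Field F] [Finite F] [AddCommMonoid R]
    {Q : F[X]} (hQ : Q.Monic) {n : ℕ} (hn : Q.natDegree ≤ n) (φ : F[X] → R) :
    ∑ g ∈ monicsOfDegree F n with Q ∣ g, φ g =
      ∑ h ∈ monicsOfDegree F (n - Q.natDegree), φ (Q * h) := by
  refine (sum_bij (fun h _ => Q * h) ?_ (fun _ _ _ _ => mul_left_cancel₀ hQ.ne_zero) ?_
    fun _ _ => rfl).symm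
  · intro h hh
    obtain ⟨hmonic, hdeg⟩ := mem_monicsOfDegree.1 hh
    rw [mem_filter, mem_monicsOfDegree, hQ.natDegree_mul hmonic]
    exact ⟨⟨hQ.mul hmonic, by omega⟩, dvd_mul_right _ _⟩
  · intro g hg
    rw [mem_filter, mem_monicsOfDegree] at hg
    obtain ⟨⟨hmonic, hdeg⟩, h, rfl⟩ := hg
    have hh := hQ.of_mul_monic_left hmonic
    rw [hQ.natDegree_mul hh] at hdeg
    exact ⟨h, mem_monicsOfDegree.2 ⟨hh, by omega⟩, rfl⟩

theorem add_mem_monicsOfDegree {F : Type*} [Field F] [Finite F] {n : ℕ} {g r : F[X]}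
    (hg : g ∈ monicsOfDegree F n) (hr : r.degree < n) : g + r ∈ monicsOfDegree F n := by
  obtain ⟨hmonic, hdeg⟩ := mem_monicsOfDegree.1 hg
  have hlt : r.degree < g.degree := by
    rwa [degree_eq_natDegree hmonic.ne_zero, hdeg]
  exact mem_monicsOfDegree.2
    ⟨hmonic.add_of_left hlt, (natDegree_eq_of_degree_eq (degree_add_eq_left_of_degree_lt hlt)).trans
      hdeg⟩

-- Adding to `g` a multiple of `∏ b ∈ B, (X - b)` multiplies its value at `a` by any prescribed
-- unit and leaves its values on `B` unchanged.
theorem sum_monicsOfDegree_mulChar_eval_eq_zero {F R : Type*} [Field F] [Finite F] [CommRing R]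
    [IsDomain R] {χ : MulChar F R} (hχ : χ ≠ 1) {a : F} {B : Finset F} (ha : a ∉ B) {n : ℕ}
    (hn : #B < n) (Y : F[X] → R) (hY : ∀ g h, (∀ b ∈ B, g.eval b = h.eval b) → Y g = Y h) :
    ∑ g ∈ monicsOfDegree F n, χ (g.eval a) * Y g = 0 := by
  obtain ⟨ζ, hζ⟩ := MulChar.ne_one_iff.1 hχ
  let N : F[X] := Lagrange.nodal B id
  have hNa : N.eval a ≠ 0 := Lagrange.eval_nodal_not_at_node fun b hb => by
    rintro rfl
    exact ha hb
  have hNB : ∀ b ∈ B, N.eval b = 0 := fun b hb => Lagrange.eval_nodal_at_node (v := id) hb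
  let T : F[X] → F[X] := fun g => g + C (g.eval a * (ζ - 1) / N.eval a) * N
  have hTa : ∀ g, (T g).eval a = ζ * g.eval a := fun g => by
    simp only [T, eval_add, eval_mul, eval_C, div_mul_cancel₀ _ hNa]
    ring
  have hTB : ∀ g, ∀ b ∈ B, (T g).eval b = g.eval b := fun g b hb => by simp [T, hNB b hb]
  have hmaps : ∀ g ∈ monicsOfDegree F n, T g ∈ monicsOfDegree F n := fun g hg => by
    refine add_mem_monicsOfDegree hg ?_
    rw [← smul_eq_C_mul]
    refine (degree_smul_le _ _).trans_lt ?_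
    rw [Lagrange.degree_nodal]
    exact_mod_cast hn
  have hinj : Set.InjOn T (monicsOfDegree F n) := fun g _ h _ hgh => by
    have heval := congrArg (eval a) hgh
    rw [hTa, hTa] at heval
    simp only [T, mul_left_cancel₀ ζ.ne_zero heval] at hgh
    exact add_right_cancel hgh
  have hinvariant : χ ζ * ∑ g ∈ monicsOfDegree F n, χ (g.eval a) * Y g =
      ∑ g ∈ monicsOfDegree F n, χ (g.eval a) * Y g := by
    rw [mul_sum]
    refine sum_nbij T hmaps hinj (surjOn_of_injOn_of_card_le T hmaps hinj le_rfl) fun g _ => ?_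
    rw [hTa, map_mul, hY _ _ (hTB g), mul_assoc]
  by_contra hne
  exact hζ ((mul_eq_right₀ hne).1 hinvariant)

end MonicPolynomials

section FieldPolynomial

open Polynomial

variable {F E : Type*} [Field F] [Field E] [Algebra F E]

/-- The characteristic polynomial over `F` of multiplication by `θ ∈ E`, written as a power of the
minimal polynomial. When `[E : F] = n`, these are the prime powers contributing to the coefficient
of degree `n` in the logarithmic derivative of an L-function over `F[X]`. -/
noncomputable def fieldPolynomial (F : Type*) {E : Type*} [Field F] [Field E] [Algebra F E]
    (θ : E) : F[X] :=
  minpoly F θ ^ (Module.finrank F E / (minpoly F θ).natDegree)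

theorem monic_fieldPolynomial [FiniteDimensional F E] (θ : E) : (fieldPolynomial F θ).Monic :=
  (minpoly.monic (.of_finite F θ)).pow _

theorem natDegree_fieldPolynomial [FiniteDimensional F E] (θ : E) :
    (fieldPolynomial F θ).natDegree = Module.finrank F E := by
  rw [fieldPolynomial, natDegree_pow, Nat.div_mul_cancel (minpoly.degree_dvd (.of_finite F θ))]

theorem minpoly_dvd_fieldPolynomial [FiniteDimensional F E] (θ : E) :
    minpoly F θ ∣ fieldPolynomial F θ :=
  dvd_pow_self _ (Nat.div_pos
    (Nat.le_of_dvd Module.finrank_pos (minpoly.degree_dvd (.of_finite F θ)))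
    (minpoly.natDegree_pos (.of_finite F θ))).ne'

open IntermediateField in
theorem eval_fieldPolynomial [FiniteDimensional F E] (θ : E) (a : F) :
    (fieldPolynomial F θ).eval a = Algebra.norm F (algebraMap F E a - θ) := by
  have hint : IsIntegral F θ := .of_finite F θ
  let b := adjoin.powerBasis hint
  have hnorm : Algebra.norm F (algebraMap F F⟮θ⟯ a - b.gen) = (minpoly F θ).eval a := by
    rw [Algebra.norm_eq_matrix_det b.basis, map_sub, AlgHom.commutes, ← minpoly_gen F θ,
      ← adjoin.powerBasis_gen hint, ← charpoly_leftMulMatrix, Matrix.eval_charpoly]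
    rfl
  have hgen : algebraMap F E a - θ = algebraMap F⟮θ⟯ E (algebraMap F F⟮θ⟯ a - b.gen) := by
    rw [map_sub, adjoin.powerBasis_gen, AdjoinSimple.algebraMap_gen]
    rfl
  have hdegree : Module.finrank F E / (minpoly F θ).natDegree = Module.finrank F⟮θ⟯ E := by
    rw [← adjoin.finrank hint, ← Module.finrank_mul_finrank F F⟮θ⟯ E,
      Nat.mul_div_cancel_left _ Module.finrank_pos]
  rw [fieldPolynomial, hdegree, eval_pow, hgen, ← Algebra.norm_norm (S := F⟮θ⟯),
    Algebra.norm_algebraMap, map_pow, hnorm]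

theorem card_filter_minpoly_eq [Finite F] [Fintype E] {P : F[X]} (hP : Irreducible P)
    (hmonic : P.Monic) :
    #{θ : E | minpoly F θ = P} = if P.natDegree ∣ Module.finrank F E then P.natDegree else 0 := by
  have hroots : ({θ : E | minpoly F θ = P} : Finset E) = (P.aroots E).toFinset := by
    ext θ
    rw [mem_filter_univ, Multiset.mem_toFinset, mem_aroots]
    refine ⟨?_, fun ⟨_, h⟩ => (minpoly.eq_of_irreducible_of_monic hP h hmonic).symm⟩
    rintro rfl
    exact ⟨hmonic.ne_zero, minpoly.aeval F θ⟩
  split_ifs with hdvd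
  · have : Fact (Irreducible P) := ⟨hP⟩
    obtain ⟨f⟩ := FiniteField.nonempty_algHom_of_finrank_dvd (F := F) (K := AdjoinRoot P) (L := E)
      (by rwa [(AdjoinRoot.powerBasis hP.ne_zero).finrank, AdjoinRoot.powerBasis_dim])
    have hroot : aeval (f (AdjoinRoot.root P)) P = 0 := by
      rw [aeval_algHom_apply, AdjoinRoot.aeval_eq, AdjoinRoot.mk_self, map_zero]
    have hsplit : (P.map (algebraMap F E)).Splits := by
      rw [minpoly.eq_of_irreducible_of_monic hP hroot hmonic]
      exact Normal.splits inferInstance _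
    rw [hroots, Multiset.toFinset_card_of_nodup
      (nodup_roots (PerfectField.separable_of_irreducible hP).map),
      ← hsplit.natDegree_eq_card_roots, natDegree_map]
  · rw [card_eq_zero, filter_eq_empty_iff]
    rintro θ - rfl
    exact hdvd (minpoly.degree_dvd (.of_finite F θ))

open UniqueFactorizationMonoid

theorem monic_of_mem_normalizedFactors {g P : F[X]} (hP : P ∈ normalizedFactors g) : P.Monic := by
  rw [← normalize_normalized_factor P hP]
  exact monic_normalize (irreducible_of_normalized_factor P hP).ne_zero

theorem minpoly_mem_normalizedFactors [FiniteDimensional F E] {g : F[X]} (hg : g ≠ 0) {θ : E}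
    (h : fieldPolynomial F θ ∣ g) : minpoly F θ ∈ normalizedFactors g := by
  have hint : IsIntegral F θ := .of_finite F θ
  obtain ⟨P, hP, hassoc⟩ := exists_mem_normalizedFactors_of_dvd hg (minpoly.irreducible hint)
    ((minpoly_dvd_fieldPolynomial θ).trans h)
  rwa [eq_of_monic_of_associated (minpoly.monic hint) (monic_of_mem_normalizedFactors hP) hassoc]

theorem card_filter_fieldPolynomial_dvd [Finite F] [Fintype E] {g : F[X]} (hg : g ≠ 0) :
    #{θ : E | fieldPolynomial F θ ∣ g} = ∑ P ∈ (normalizedFactors g).toFinset,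
      if P.natDegree ∣ Module.finrank F E ∧
        Module.finrank F E / P.natDegree ≤ (normalizedFactors g).count P
      then P.natDegree else 0 := by
  rw [card_eq_sum_card_fiberwise (f := minpoly F) (t := (normalizedFactors g).toFinset)
    fun θ hθ => mem_coe.2 (Multiset.mem_toFinset.2
      (minpoly_mem_normalizedFactors hg (mem_filter.1 hθ).2))]
  refine sum_congr rfl fun P hP => ?_
  have hPg := Multiset.mem_toFinset.1 hP
  have hirr := irreducible_of_normalized_factor P hPg
  have hpow : ∀ m, P ^ m ∣ g ↔ m ≤ (normalizedFactors g).count P := fun m => by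
    rw [pow_dvd_iff_le_emultiplicity, emultiplicity_eq_count_normalizedFactors hirr hg,
      normalize_normalized_factor P hPg, Nat.cast_le]
  have hfibre : ∀ θ : E, fieldPolynomial F θ ∣ g ∧ minpoly F θ = P ↔
      minpoly F θ = P ∧ Module.finrank F E / P.natDegree ≤ (normalizedFactors g).count P := by
    intro θ
    rw [and_comm, ← hpow]
    refine and_congr_right ?_
    rintro rfl
    rfl
  simp only [filter_filter, hfibre]
  by_cases hcount : Module.finrank F E / P.natDegree ≤ (normalizedFactors g).count P
  · simpa only [hcount, and_true] using
      card_filter_minpoly_eq hirr (monic_of_mem_normalizedFactors hPg)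
  · simp [hcount]

theorem card_filter_dvd_and_div_le {d m N : ℕ} (hd : 0 < d) (hN : m * d ≤ N) :
    #{i ∈ range N | d ∣ i + 1 ∧ (i + 1) / d ≤ m} = m := by
  have hfilter : {i ∈ range N | d ∣ i + 1 ∧ (i + 1) / d ≤ m} = {i ∈ range (m * d) | d ∣ i + 1} := by
    ext i
    simp only [mem_filter, mem_range]
    constructor
    · rintro ⟨-, ⟨k, hk⟩, hle⟩
      rw [hk, Nat.mul_div_cancel_left _ hd] at hle
      exact ⟨by nlinarith, k, hk⟩
    · rintro ⟨hlt, hdvd⟩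
      exact ⟨by omega, hdvd, Nat.div_le_of_le_mul (by nlinarith)⟩
  rw [hfilter, Nat.card_multiples, Nat.mul_div_cancel _ hd]

theorem sum_card_filter_fieldPolynomial_dvd [Finite F] {E : ℕ → Type*} [∀ i, Field (E i)]
    [∀ i, Fintype (E i)] [∀ i, Algebra F (E i)] (hE : ∀ i, Module.finrank F (E i) = i + 1)
    {g : F[X]} (hg : g.Monic) :
    ∑ i ∈ range g.natDegree, #{θ : E i | fieldPolynomial F θ ∣ g} = g.natDegree := by
  have hprod : (normalizedFactors g).prod = g := by
    rw [prod_normalizedFactors_eq hg.ne_zero, hg.normalize_eq_self]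
  have hdegree : ∑ P ∈ (normalizedFactors g).toFinset, (normalizedFactors g).count P * P.natDegree =
      g.natDegree := by
    conv_rhs => rw [← hprod, natDegree_multiset_prod _ (zero_notMem_normalizedFactors g),
      sum_multiset_map_count]
    rfl
  simp only [card_filter_fieldPolynomial_dvd hg.ne_zero, hE]
  rw [sum_comm]
  refine (sum_congr rfl fun P hP => ?_).trans hdegree
  have hpos : 0 < P.natDegree :=
    (irreducible_of_normalized_factor P (Multiset.mem_toFinset.1 hP)).natDegree_pos
  rw [← sum_filter, sum_const, smul_eq_mul, card_filter_dvd_and_div_le hpos]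
  rw [← hdegree]
  exact single_le_sum (f := fun P => (normalizedFactors g).count P * P.natDegree)
    (fun _ _ => Nat.zero_le _) hP

end FieldPolynomial

section LFunction

open Polynomial

variable {F : Type*} [Field F] {E : ℕ → Type*} [∀ i, Field (E i)] [∀ i, Fintype (E i)]
  [∀ i, Algebra F (E i)]

theorem add_one_mul_sum_monicsOfDegree [Finite F] {R : Type*} [CommSemiring R]
    (hE : ∀ i, Module.finrank F (E i) = i + 1) (Φ : F[X] →* R) (n : ℕ) :
    ((n : R) + 1) * ∑ g ∈ monicsOfDegree F (n + 1), Φ g =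
      ∑ i ∈ range (n + 1), (∑ θ : E i, Φ (fieldPolynomial F θ)) *
        ∑ g ∈ monicsOfDegree F (n - i), Φ g := by
  have hcount : ∀ g ∈ monicsOfDegree F (n + 1), ((n : R) + 1) * Φ g =
      ∑ i ∈ range (n + 1), ∑ θ : E i, if fieldPolynomial F θ ∣ g then Φ g else 0 := by
    intro g hg
    obtain ⟨hmonic, hdeg⟩ := mem_monicsOfDegree.1 hg
    have h := sum_card_filter_fieldPolynomial_dvd hE hmonic
    rw [hdeg] at h
    simp only [← sum_filter, sum_const, nsmul_eq_mul]
    rw [← sum_mul, ← Nat.cast_sum, h, Nat.cast_succ]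
  rw [mul_sum, sum_congr rfl hcount, sum_comm]
  refine sum_congr rfl fun i hi => ?_
  rw [sum_comm, sum_mul]
  refine sum_congr rfl fun θ _ => ?_
  have : FiniteDimensional F (E i) := .of_finrank_pos (by rw [hE]; exact i.succ_pos)
  have hdeg : (fieldPolynomial F θ).natDegree = i + 1 := by rw [natDegree_fieldPolynomial, hE]
  rw [← sum_filter, sum_monicsOfDegree_filter_dvd (monic_fieldPolynomial θ)
    (by rw [hdeg]; exact mem_range.1 hi), hdeg, Nat.add_sub_add_right, mul_sum]
  simp only [map_mul]

/-- The L-function `∑ Φ(g) T ^ deg g` of a multiplicative function `Φ` on monic polynomials,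
truncated after degree `d`. -/
noncomputable def lPolynomial [Finite F] (Φ : F[X] → ℂ) (d : ℕ) : ℂ[X] :=
  ∑ n ∈ range (d + 1), monomial n (∑ g ∈ monicsOfDegree F n, Φ g)

theorem natDegree_lPolynomial_le [Finite F] (Φ : F[X] → ℂ) (d : ℕ) :
    (lPolynomial Φ d).natDegree ≤ d :=
  natDegree_sum_le_of_forall_le _ _ fun _ hn =>
    (natDegree_monomial_le _).trans (Nat.lt_succ_iff.1 (mem_range.1 hn))

theorem coeff_lPolynomial [Finite F] {Φ : F[X] → ℂ} {d : ℕ}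
    (hΦ : ∀ n, d < n → ∑ g ∈ monicsOfDegree F n, Φ g = 0) (n : ℕ) :
    (lPolynomial Φ d).coeff n = ∑ g ∈ monicsOfDegree F n, Φ g := by
  simp only [lPolynomial, finsetSum_coeff, coeff_monomial, sum_ite_eq', mem_range,
    ite_eq_left_iff, Nat.lt_succ_iff, not_le]
  exact fun h => (hΦ n h).symm

theorem norm_sum_X_add_C_le [Fintype F] (hE : ∀ i, Module.finrank F (E i) = i + 1)
    (Φ : F[X] →* ℂ) {d : ℕ} (hΦ : ∀ n, d < n → ∑ g ∈ monicsOfDegree F n, Φ g = 0) {B ρ : ℝ}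
    (hρ : 0 < ρ) (hB : ∀ i, ‖∑ θ : E i, Φ (fieldPolynomial F θ)‖ ≤ B * ρ ^ i) :
    ‖∑ s, Φ (X + C s)‖ ≤ d * ρ := by
  let σ : PowerSeries ℂ := .mk fun i => ∑ θ : E i, Φ (fieldPolynomial F θ)
  have hone : ∑ g ∈ monicsOfDegree F 0, Φ g = 1 := by simp [monicsOfDegree_zero]
  have hne : lPolynomial Φ d ≠ 0 := fun h => by
    simpa [h, hone] using coeff_lPolynomial hΦ 0
  have hder : (derivative (lPolynomial Φ d) : PowerSeries ℂ) = lPolynomial Φ d * σ := by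
    ext n
    rw [mul_comm (lPolynomial Φ d : PowerSeries ℂ), PowerSeries.coeff_mul,
      Nat.sum_antidiagonal_eq_sum_range_succ
        fun i j => PowerSeries.coeff i σ * PowerSeries.coeff j (lPolynomial Φ d : PowerSeries ℂ)]
    simp only [coeff_coe, coeff_derivative, coeff_lPolynomial hΦ, σ, PowerSeries.coeff_mk]
    rw [mul_comm, add_one_mul_sum_monicsOfDegree hE]
  have hlinear : ∑ s, Φ (X + C s) = PowerSeries.coeff 0 σ := by
    have h := add_one_mul_sum_monicsOfDegree hE Φ 0
    have hinj : Function.Injective fun s : F => X + C s := fun s t h =>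
      C_injective (add_left_cancel (a := (X : F[X])) h)
    rw [zero_add, monicsOfDegree_one, sum_image hinj.injOn,
      Nat.cast_zero, zero_add, one_mul, sum_range_one, hone, mul_one] at h
    rw [h, PowerSeries.coeff_mk]
  rw [hlinear]
  exact norm_coeff_zero_le_of_derivative_eq_mul hne (natDegree_lPolynomial_le _ d) hder hρ
    fun n => by simpa only [σ, PowerSeries.coeff_mk] using hB n

end LFunction

section NormLift

variable {F E : Type*} [Field F] [Field E] [Algebra F E]

/-- The lift `χ ∘ N_{E/F}` of a multiplicative character `χ` of `F` to `E`. -/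
noncomputable def normLift (E : Type*) [Field E] [Algebra F E] {R : Type*} [CommMonoidWithZero R]
    (χ : MulChar F R) : MulChar E R :=
  .ofUnitHom (χ.toUnitHom.comp (Units.map (Algebra.norm F)))

theorem normLift_apply [FiniteDimensional F E] {R : Type*} [CommMonoidWithZero R] (χ : MulChar F R)
    (x : E) : normLift E χ x = χ (Algebra.norm F x) := by
  rcases eq_or_ne x 0 with rfl | hx
  · rw [MulChar.map_zero, Algebra.norm_zero, MulChar.map_zero]
  · lift x to Eˣ using hx.isUnit
    rw [normLift, MulChar.ofUnitHom_coe, MonoidHom.comp_apply, MulChar.coe_toUnitHom]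
    rfl

theorem normLift_ne_one [Finite E] {R : Type*} [CommMonoidWithZero R] {χ : MulChar F R}
    (hχ : χ ≠ 1) : normLift E χ ≠ 1 := by
  obtain ⟨u, hu⟩ := MulChar.ne_one_iff.1 hχ
  obtain ⟨v, rfl⟩ := FiniteField.unitsMap_norm_surjective F E u
  refine MulChar.ne_one_iff.2 ⟨v, ?_⟩
  rwa [normLift_apply]

theorem normLift_pow_card_sub_one [Fintype F] [FiniteDimensional F E] {R : Type*}
    [CommMonoidWithZero R] (χ : MulChar F R) : normLift E χ ^ (Fintype.card F - 1) = 1 := by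
  ext u
  rw [MulChar.pow_apply_coe, MulChar.one_apply_coe, normLift_apply, ← map_pow,
    FiniteField.pow_card_sub_one_eq_one _ (Algebra.norm_ne_zero_iff.2 u.ne_zero), map_one]

end NormLift

section CharacterSum

open Polynomial

variable {F : Type*} [Field F] [Fintype F]

theorem pow_add_one_div_two_le_mul_sqrt_pow {q : ℝ} (hq : 1 ≤ q) (n : ℕ) :
    q ^ ((n + 1) / 2) ≤ q * √q ^ n := by
  have hsqrt : 1 ≤ √q := Real.one_le_sqrt.2 hq
  calc q ^ ((n + 1) / 2) = √q ^ (2 * ((n + 1) / 2)) := by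
        rw [pow_mul, Real.sq_sqrt (zero_le_one.trans hq)]
    _ ≤ √q ^ (n + 1) := pow_le_pow_right₀ hsqrt (by omega)
    _ = √q * √q ^ n := pow_succ' _ _
    _ ≤ q * √q ^ n := by
        gcongr
        exact Real.sqrt_le_left (zero_le_one.trans hq) |>.2 (le_self_pow₀ hq two_ne_zero)

theorem exists_norm_sum_normLift_div_le {a₁ a₂ a₃ a₄ : F} (h₁₂ : a₁ ≠ a₂) (h₁₃ : a₁ ≠ a₃)
    (h₂₃ : a₂ ≠ a₃) (h₃₄ : a₃ ≠ a₄) {χ : MulChar F ℂ} (hχ : χ ≠ 1) (ψ : MulChar F ℂ) :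
    ∃ B : ℝ, ∀ (E : Type) [Field E] [Fintype E] [Algebra F E],
      ‖∑ θ : E,
        normLift E χ ((algebraMap F E a₁ - θ) / (algebraMap F E a₂ - θ)) *
          normLift E ψ ((algebraMap F E a₃ - θ) / (algebraMap F E a₄ - θ))‖ ≤
        B * √(Fintype.card F) ^ Module.finrank F E := by
  obtain ⟨p, _, f, hp, hf⟩ := FiniteField.card' F
  set q := Fintype.card F
  have hq : 1 < q := Fintype.one_lt_card
  have : Fact p.Prime := ⟨hp⟩
  let D : ℝ := (q - 1 : ℕ) * (3 * (q - 1 : ℕ) + 8 + (q - 1 : ℕ) * (2 * (q - 1 : ℕ) + 4))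
  refine ⟨D * q + 4, fun E _ _ _ => ?_⟩
  have : CharP E p := charP_of_injective_algebraMap (algebraMap F E).injective p
  let n := Module.finrank F E
  have hcard : Fintype.card E = q ^ n := Module.card_eq_pow_finrank
  have hsplit : Fintype.card E = p ^ (f * ((n + 1) / 2)) * p ^ (f * (n / 2)) := by
    rw [hcard, pow_mul, pow_mul, ← hf, ← pow_add]
    congr 1
    omega
  have hinj := (algebraMap F E).injective
  have hbound := norm_sum_mulChar_div_le hsplit (Nat.mul_le_mul_left _ (by omega))
    (Nat.sub_pos_of_lt hq) (by simpa [hcard] using Nat.sub_dvd_pow_sub_pow q 1 n)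
    (hinj.ne h₁₂) (hinj.ne h₁₃) (hinj.ne h₂₃) (hinj.ne h₃₄) (normLift_ne_one (E := E) hχ)
    (normLift_pow_card_sub_one χ) (normLift_pow_card_sub_one ψ)
  have hq' : (1 : ℝ) ≤ q := by exact_mod_cast hq.le
  have hpow : (p : ℝ) ^ (f * ((n + 1) / 2)) = (q : ℝ) ^ ((n + 1) / 2) := by
    rw [pow_mul, hf, Nat.cast_pow]
  calc _ ≤ D * (q : ℝ) ^ ((n + 1) / 2) + 4 := hbound.trans_eq (by rw [hpow])
    _ ≤ D * (q * √q ^ n) + 4 * √q ^ n := by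
        gcongr
        · exact pow_add_one_div_two_le_mul_sqrt_pow hq' n
        · exact le_mul_of_one_le_right (by norm_num) (one_le_pow₀ (Real.one_le_sqrt.2 hq'))
    _ = (D * q + 4) * √q ^ n := by ring

/-- The completely multiplicative function `g ↦ χ(g(a₁) / g(a₂)) ψ(g(a₃) / g(a₄))` on polynomials,
whose L-function governs the four-point character sum. -/
noncomputable def evalRatioCharacter {F : Type*} [Field F] (χ ψ : MulChar F ℂ)
    (a₁ a₂ a₃ a₄ : F) : F[X] →* ℂ where
  toFun g := χ (g.eval a₁ / g.eval a₂) * ψ (g.eval a₃ / g.eval a₄)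
  map_one' := by simp
  map_mul' g h := by
    simp only [eval_mul, mul_div_mul_comm, map_mul]
    ring

theorem sum_monicsOfDegree_evalRatioCharacter {F : Type*} [Field F] [Finite F]
    {a₁ a₂ a₃ a₄ : F} (h₁₂ : a₁ ≠ a₂) (h₁₃ : a₁ ≠ a₃) (h₁₄ : a₁ ≠ a₄) {χ : MulChar F ℂ} (hχ : χ ≠ 1)
    (ψ : MulChar F ℂ) {n : ℕ} (hn : 3 < n) :
    ∑ g ∈ monicsOfDegree F n, evalRatioCharacter χ ψ a₁ a₂ a₃ a₄ g = 0 := by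
  have h := sum_monicsOfDegree_mulChar_eval_eq_zero hχ (a := a₁) (B := {a₂, a₃, a₄})
    (by simp [h₁₂, h₁₃, h₁₄]) (card_le_three.trans_lt hn)
    (fun g => χ⁻¹ (g.eval a₂) * ψ (g.eval a₃ / g.eval a₄)) fun g h hgh => by
      simp [hgh a₂, hgh a₃, hgh a₄]
  simpa only [evalRatioCharacter, MonoidHom.coe_mk, OneHom.coe_mk, div_eq_mul_inv (eval a₁ _),
    map_mul, ← MulChar.inv_apply', mul_assoc] using h

theorem norm_sum_mulChar_div_le_three_mul_sqrt {a₁ a₂ a₃ a₄ : F} (h₁₂ : a₁ ≠ a₂) (h₁₃ : a₁ ≠ a₃)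
    (h₁₄ : a₁ ≠ a₄) (h₂₃ : a₂ ≠ a₃) (h₃₄ : a₃ ≠ a₄) {χ : MulChar F ℂ} (hχ : χ ≠ 1)
    (ψ : MulChar F ℂ) :
    ‖∑ s, χ ((s + a₁) / (s + a₂)) * ψ ((s + a₃) / (s + a₄))‖ ≤ 3 * √(Fintype.card F) := by
  obtain ⟨p, _, -, hp, -⟩ := FiniteField.card' F
  have : Fact p.Prime := ⟨hp⟩
  obtain ⟨B, hB⟩ := exists_norm_sum_normLift_div_le h₁₂ h₁₃ h₂₃ h₃₄ hχ ψ
  let E (i : ℕ) : Type := FiniteField.Extension F p (i + 1)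
  let (i : ℕ) : Field (E i) := inferInstanceAs (Field (FiniteField.Extension F p (i + 1)))
  let (i : ℕ) : Fintype (E i) := .ofFinite (FiniteField.Extension F p (i + 1))
  let (i : ℕ) : Algebra F (E i) := inferInstanceAs (Algebra F (FiniteField.Extension F p (i + 1)))
  have hE (i : ℕ) : Module.finrank F (E i) = i + 1 := FiniteField.finrank_extension F p (i + 1)
  have h := norm_sum_X_add_C_le hE (evalRatioCharacter χ ψ a₁ a₂ a₃ a₄) (d := 3)
    (fun n hn => sum_monicsOfDegree_evalRatioCharacter h₁₂ h₁₃ h₁₄ hχ ψ hn)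
    (B := B * √(Fintype.card F)) (ρ := √(Fintype.card F))
    (Real.sqrt_pos.2 (by exact_mod_cast Fintype.card_pos)) fun i => ?_
  · simpa [evalRatioCharacter, add_comm] using h
  · have hi := hB (E i)
    rw [hE, pow_succ', ← mul_assoc] at hi
    simpa [evalRatioCharacter, eval_fieldPolynomial, normLift_apply, div_eq_mul_inv,
      Algebra.norm_inv] using hi

end CharacterSum

section LargeSieve

open ComplexConjugate

variable {S Y : Type*} [Fintype S] [Fintype Y]

theorem sum_norm_sum_mul_sq_le_of_dual {K : S → Y → ℂ} {Δ : ℝ} (hΔ : 0 ≤ Δ)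
    (hK : ∀ w : Y → ℂ, ∑ s, ‖∑ y, w y * K s y‖ ^ 2 ≤ Δ * ∑ y, ‖w y‖ ^ 2) (c : S → ℂ) :
    ∑ y, ‖∑ s, c s * K s y‖ ^ 2 ≤ Δ * ∑ s, ‖c s‖ ^ 2 := by
  let w : Y → ℂ := fun y => conj (∑ s, c s * K s y)
  have hw : ∑ y, ‖∑ s, c s * K s y‖ ^ 2 = ∑ y, ‖w y‖ ^ 2 := by
    simp only [w, RCLike.norm_conj]
  rw [hw]
  set N := ∑ y, ‖w y‖ ^ 2
  have hN : 0 ≤ N := by positivity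
  have hswap : (N : ℂ) = ∑ s, c s * ∑ y, w y * K s y := by
    simp only [N, Complex.ofReal_sum, Complex.ofReal_pow, ← Complex.mul_conj']
    simp only [w, Complex.conj_conj, mul_sum]
    rw [sum_comm]
    exact sum_congr rfl fun _ _ => sum_congr rfl fun _ _ => by ring
  have hle : N ≤ ∑ s, ‖c s‖ * ‖∑ y, w y * K s y‖ := by
    rw [← Real.norm_of_nonneg hN, ← Complex.norm_real, hswap]
    exact norm_sum_le_of_le _ fun s _ => norm_mul_le _ _
  have hsq : N * N ≤ (Δ * ∑ s, ‖c s‖ ^ 2) * N := by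
    calc N * N = N ^ 2 := (sq N).symm
      _ ≤ (∑ s, ‖c s‖ * ‖∑ y, w y * K s y‖) ^ 2 := by gcongr
      _ ≤ (∑ s, ‖c s‖ ^ 2) * ∑ s, ‖∑ y, w y * K s y‖ ^ 2 := sum_mul_sq_le_sq_mul_sq _ _ _
      _ ≤ (∑ s, ‖c s‖ ^ 2) * (Δ * N) := by gcongr; exact hK w
      _ = (Δ * ∑ s, ‖c s‖ ^ 2) * N := by ring
  rcases hN.eq_or_lt with hzero | hpos
  · rw [← hzero]
    positivity
  · exact le_of_mul_le_mul_right hsq hpos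

theorem sum_norm_sum_mul_sq_le_sqrt_gram (K : S → Y → ℂ) (w : Y → ℂ) :
    ∑ s, ‖∑ y, w y * K s y‖ ^ 2 ≤
      √(∑ p : Y × Y, ‖∑ s, K s p.1 * conj (K s p.2)‖ ^ 2) * ∑ y, ‖w y‖ ^ 2 := by
  have hexpand : ((∑ s, ‖∑ y, w y * K s y‖ ^ 2 : ℝ) : ℂ) =
      ∑ p : Y × Y, (w p.1 * conj (w p.2)) * ∑ s, K s p.1 * conj (K s p.2) := by
    have hsquare (s : S) : ((‖∑ y, w y * K s y‖ : ℝ) : ℂ) ^ 2 =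
        ∑ p : Y × Y, (w p.1 * conj (w p.2)) * (K s p.1 * conj (K s p.2)) := by
      rw [← Complex.mul_conj', map_sum, sum_mul_sum, Fintype.sum_prod_type]
      exact sum_congr rfl fun y _ => sum_congr rfl fun y' _ => by rw [map_mul]; ring
    rw [Complex.ofReal_sum, sum_congr rfl fun s _ => (Complex.ofReal_pow _ 2).trans (hsquare s),
      sum_comm]
    exact sum_congr rfl fun p _ => (mul_sum _ _ _).symm
  have hnorm : ∑ s, ‖∑ y, w y * K s y‖ ^ 2 ≤
      ∑ p : Y × Y, (‖w p.1‖ * ‖w p.2‖) * ‖∑ s, K s p.1 * conj (K s p.2)‖ := by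
    rw [← Real.norm_of_nonneg (by positivity : 0 ≤ ∑ s, ‖∑ y, w y * K s y‖ ^ 2),
      ← Complex.norm_real, hexpand]
    exact norm_sum_le_of_le _ fun p _ => by rw [norm_mul, norm_mul, RCLike.norm_conj]
  have hweights : ∑ p : Y × Y, (‖w p.1‖ * ‖w p.2‖) ^ 2 = (∑ y, ‖w y‖ ^ 2) ^ 2 := by
    simp only [mul_pow, Fintype.sum_prod_type, sq (∑ y, ‖w y‖ ^ 2), sum_mul_sum]
  calc _ ≤ _ := hnorm
    _ ≤ √(∑ p : Y × Y, (‖w p.1‖ * ‖w p.2‖) ^ 2) *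
        √(∑ p : Y × Y, ‖∑ s, K s p.1 * conj (K s p.2)‖ ^ 2) := Real.sum_mul_le_sqrt_mul_sqrt _ _ _
    _ = _ := by rw [hweights, Real.sqrt_sq (by positivity), mul_comm]

theorem sum_prod_sq_le_of_le_off_graph {G : Y → Y → ℝ} (hG : ∀ y y', 0 ≤ G y y') (A : Y → Y)
    {b C : ℝ} (hC : ∀ y y', G y y' ≤ C)
    (hb : ∀ y y', y ≠ y' → y ≠ A y' → y' ≠ A y → G y y' ≤ b) :
    ∑ p : Y × Y, G p.1 p.2 ^ 2 ≤ Fintype.card Y ^ 2 * b ^ 2 + 3 * Fintype.card Y * C ^ 2 := by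
  have hpointwise : ∀ y y', G y y' ^ 2 ≤ b ^ 2 + ((if y = y' then C ^ 2 else 0) +
      (if y = A y' then C ^ 2 else 0) + (if y' = A y then C ^ 2 else 0)) := by
    intro y y'
    by_cases h : y ≠ y' ∧ y ≠ A y' ∧ y' ≠ A y
    · have := pow_le_pow_left₀ (hG y y') (hb y y' h.1 h.2.1 h.2.2) 2
      simpa [h.1, h.2.1, h.2.2] using this
    · have := pow_le_pow_left₀ (hG y y') (hC y y') 2
      split_ifs <;> first | nlinarith [sq_nonneg b, sq_nonneg C] | tauto
  calc _ = ∑ y, ∑ y', G y y' ^ 2 := Fintype.sum_prod_type _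
    _ ≤ ∑ y, ∑ y', (b ^ 2 + ((if y = y' then C ^ 2 else 0) + (if y = A y' then C ^ 2 else 0) +
        (if y' = A y then C ^ 2 else 0))) :=
      sum_le_sum fun y _ => sum_le_sum fun y' _ => hpointwise y y'
    _ = Fintype.card Y ^ 2 * b ^ 2 + 3 * Fintype.card Y * C ^ 2 := by
      simp only [sum_add_distrib]
      rw [sum_comm (f := fun y y' => if y = A y' then C ^ 2 else 0)]
      simp only [sum_const, card_univ, nsmul_eq_mul, sum_ite_eq, sum_ite_eq', mem_univ, if_true]
      ring

theorem sum_sq_le_of_le_of_sum_eq_one {μ : S → ℝ} {δ : ℝ} (hμ : ∀ s, 0 ≤ μ s)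
    (hsum : ∑ s, μ s = 1) (hδ : ∀ s, μ s ≤ δ) : ∑ s, μ s ^ 2 ≤ δ :=
  calc ∑ s, μ s ^ 2 ≤ ∑ s, δ * μ s :=
        sum_le_sum fun s _ => (sq (μ s)).trans_le (mul_le_mul_of_nonneg_right (hδ s) (hμ s))
    _ = δ := by rw [← mul_sum, hsum, mul_one]

theorem sum_norm_sum_mul_sq_le_of_gram_le {F : Type*} [Fintype F] {K : F → F → ℂ}
    (hK : ∀ s y, ‖K s y‖ ≤ 1) (A : F → F)
    (hgram : ∀ y y', y ≠ y' → y ≠ A y' → y' ≠ A y →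
      ‖∑ s, K s y * conj (K s y')‖ ≤ 7 * √(Fintype.card F)) {μ : F → ℝ} {δ : ℝ}
    (hμ : ∀ s, 0 ≤ μ s) (hsum : ∑ s, μ s = 1) (hδ : ∀ s, μ s ≤ δ) :
    ∑ y, ‖∑ s, (μ s : ℂ) * K s y‖ ^ 2 ≤ 8 * (Fintype.card F * √(Fintype.card F)) * δ := by
  set q : ℝ := (Fintype.card F : ℝ) with hq
  have hsqrt : √q ^ 2 = q := Real.sq_sqrt (Nat.cast_nonneg _)
  have htrivial : ∀ y y', ‖∑ s, K s y * conj (K s y')‖ ≤ q := fun y y' => by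
    have h := norm_sum_le_of_le univ fun s _ => show ‖K s y * conj (K s y')‖ ≤ 1 by
      rw [norm_mul, RCLike.norm_conj]
      exact mul_le_one₀ (hK s y) (norm_nonneg _) (hK s y')
    simpa using h
  have hfrobenius : √(∑ p : F × F, ‖∑ s, K s p.1 * conj (K s p.2)‖ ^ 2) ≤ 8 * (q * √q) := by
    refine Real.sqrt_le_iff.2 ⟨by positivity, ?_⟩
    refine (sum_prod_sq_le_of_le_off_graph (fun _ _ => norm_nonneg _) A htrivial hgram).trans ?_
    rw [mul_pow, mul_pow, mul_pow, hsqrt, ← hq]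
    have : 0 ≤ q ^ 3 := by positivity
    linarith
  calc _ ≤ √(∑ p : F × F, ‖∑ s, K s p.1 * conj (K s p.2)‖ ^ 2) * ∑ s, ‖(μ s : ℂ)‖ ^ 2 :=
        sum_norm_sum_mul_sq_le_of_dual (Real.sqrt_nonneg _) (sum_norm_sum_mul_sq_le_sqrt_gram K) _
    _ ≤ 8 * (q * √q) * δ := by
        gcongr
        simpa only [Complex.norm_real, Real.norm_eq_abs, sq_abs] using
          sum_sq_le_of_le_of_sum_eq_one hμ hsum hδ

end LargeSieve

section Gram

open ComplexConjugate

theorem mul_conj_eq_mulChar_div {F : Type*} [Field F] {u : F → F → ℂ} (hu : ∀ s y, ‖u s y‖ = 1)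
    {χ : MulChar F ℂ} (hχ : ∀ s y, s + y ≠ 0 → u s y = χ (s + y)) {s y y' : F}
    (hy : s + y ≠ 0) (hy' : s + y' ≠ 0) : u s y * conj (u s y') = χ ((s + y) / (s + y')) := by
  rw [← Complex.inv_eq_conj (hu s y'), hχ s y hy, hχ s y' hy', ← MulChar.inv_apply_eq_inv',
    MulChar.inv_apply', ← map_mul, ← div_eq_mul_inv]

variable {F : Type*} [Field F] [Fintype F]

theorem sum_mulChar_div_eq_neg_one {a b : F} (hab : a ≠ b) {χ : MulChar F ℂ} (hχ : χ ≠ 1) :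
    ∑ s, χ ((s + a) / (s + b)) = -1 := by
  have hd : a - b ≠ 0 := sub_ne_zero.2 hab
  have hreparam : ∑ s, χ ((s + a) / (s + b)) = ∑ t : F, χ ((t⁻¹ + (a - b)) * t) :=
    Fintype.sum_equiv ((Equiv.addRight b).trans (Equiv.inv F)) _ _ fun s => by
      simp [div_eq_mul_inv]
  have haffine : ∑ t : F, χ (1 + (a - b) * t) = 0 := by
    rw [← MulChar.sum_eq_zero_of_ne_one hχ]
    exact Fintype.sum_equiv ((Equiv.mulLeft₀ (a - b) hd).trans (Equiv.addLeft 1)) _ _ fun t => rfl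
  have hoff : ∀ t ∈ univ.erase (0 : F), χ ((t⁻¹ + (a - b)) * t) = χ (1 + (a - b) * t) :=
    fun t ht => by rw [add_mul, inv_mul_cancel₀ (ne_of_mem_erase ht)]
  rw [hreparam, ← add_sum_erase _ _ (mem_univ (0 : F)), sum_congr rfl hoff,
    sum_erase_eq_sub (mem_univ _), haffine]
  simp [MulChar.map_zero]

theorem norm_sum_le_norm_sum_add_card {ι : Type*} [Fintype ι] {t u : ι → ℂ} {B : Finset ι}
    (ht : ∀ i, ‖t i‖ ≤ 1) (hoff : ∀ i ∉ B, t i = u i) (hon : ∀ i ∈ B, u i = 0) :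
    ‖∑ i, t i‖ ≤ ‖∑ i, u i‖ + #B := by
  have hsplit : ∑ i, t i = ∑ i, u i + ∑ i ∈ B, t i := by
    rw [← sum_add_sum_compl B t, ← sum_add_sum_compl B u, sum_eq_zero hon, zero_add, add_comm,
      sum_congr rfl fun i hi => hoff i (mem_compl.1 hi)]
  have hB : ‖∑ i ∈ B, t i‖ ≤ #B := by
    simpa using norm_sum_le_of_le B fun i _ => ht i
  rw [hsplit]
  exact (norm_add_le _ _).trans (by gcongr)

variable {u v : F → F → ℂ} {χ ψ : MulChar F ℂ}

theorem norm_sum_mul_conj_le_three (hu : ∀ s y, ‖u s y‖ = 1) (hv : ∀ s y, ‖v s y‖ = 1) (hχ : χ ≠ 1)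
    (huχ : ∀ s y, s + y ≠ 0 → u s y = χ (s + y)) {y y' : F} (hy : y ≠ y') (z : F) :
    ‖∑ s, (u s y * v s z) * conj (u s y' * v s z)‖ ≤ 3 := by
  have h := norm_sum_le_norm_sum_add_card (B := {-y, -y'})
    (t := fun s => (u s y * v s z) * conj (u s y' * v s z))
    (u := fun s => χ ((s + y) / (s + y'))) (fun s => by simp [hu, hv]) (fun s hs => ?_)
    fun s hs => ?_
  · have hcard : (#{-y, -y'} : ℝ) ≤ 2 := by exact_mod_cast card_le_two
    rw [sum_mulChar_div_eq_neg_one hy hχ, norm_neg, norm_one] at h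
    linarith
  · simp only [mem_insert, mem_singleton, not_or, ← add_eq_zero_iff_eq_neg] at hs
    rw [map_mul, mul_mul_mul_comm, mul_conj_eq_mulChar_div hu huχ hs.1 hs.2, Complex.mul_conj',
      hv]
    simp
  · simp only [mem_insert, mem_singleton] at hs
    rcases hs with rfl | rfl <;> simp [MulChar.map_zero]

theorem norm_sum_mul_conj_le_three_mul_sqrt_add_four (hu : ∀ s y, ‖u s y‖ = 1)
    (hv : ∀ s y, ‖v s y‖ = 1) (hχ : χ ≠ 1) (huχ : ∀ s y, s + y ≠ 0 → u s y = χ (s + y))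
    (hvψ : ∀ s y, s + y ≠ 0 → v s y = ψ (s + y))
    {y y' z z' : F} (hyy' : y ≠ y') (hyz : y ≠ z) (hyz' : y ≠ z') (hy'z : y' ≠ z) (hzz' : z ≠ z') :
    ‖∑ s, (u s y * v s z) * conj (u s y' * v s z')‖ ≤ 3 * √(Fintype.card F) + 4 := by
  refine (norm_sum_le_norm_sum_add_card (B := {-y, -y', -z, -z'})
    (u := fun s => χ ((s + y) / (s + y')) * ψ ((s + z) / (s + z'))) (fun s => by simp [hu, hv])
    (fun s hs => ?_) fun s hs => ?_).trans (add_le_add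
      (norm_sum_mulChar_div_le_three_mul_sqrt hyy' hyz hyz' hy'z hzz' hχ ψ)
      (by exact_mod_cast card_le_four))
  · simp only [mem_insert, mem_singleton, not_or, ← add_eq_zero_iff_eq_neg] at hs
    rw [map_mul, mul_mul_mul_comm, mul_conj_eq_mulChar_div hu huχ hs.1 hs.2.1,
      mul_conj_eq_mulChar_div hv hvψ hs.2.2.1 hs.2.2.2]
  · simp only [mem_insert, mem_singleton] at hs
    rcases hs with rfl | rfl | rfl | rfl <;> simp [MulChar.map_zero]

theorem sum_norm_sum_mul_sq_le_of_mulChar (hu : ∀ s y, ‖u s y‖ = 1) (hv : ∀ s y, ‖v s y‖ = 1)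
    (hχ : χ ≠ 1) (huχ : ∀ s y, s + y ≠ 0 → u s y = χ (s + y))
    (hvψ : ∀ s y, s + y ≠ 0 → v s y = ψ (s + y)) {A : F → F} (hA : ∀ y, A y ≠ y)
    {μ : F → ℝ} {δ : ℝ} (hμ : ∀ s, 0 ≤ μ s) (hsum : ∑ s, μ s = 1) (hδ : ∀ s, μ s ≤ δ) :
    ∑ y, ‖∑ s, (μ s : ℂ) * (u s y * v s (A y))‖ ^ 2 ≤
      8 * (Fintype.card F * √(Fintype.card F)) * δ := by
  have hsqrt : 1 ≤ √(Fintype.card F) := Real.one_le_sqrt.2 (by exact_mod_cast Fintype.card_pos)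
  refine sum_norm_sum_mul_sq_le_of_gram_le (fun s y => by simp [hu, hv]) A
    (fun y y' hyy' hyAy' hy'Ay => ?_) hμ hsum hδ
  by_cases himage : A y = A y'
  · rw [himage]
    linarith [norm_sum_mul_conj_le_three hu hv hχ huχ hyy' (A y')]
  · linarith [norm_sum_mul_conj_le_three_mul_sqrt_add_four hu hv hχ huχ hvψ hyy'
      (hA y).symm hyAy' hy'Ay himage]

end Gram

section Xor

variable {G H : Type*} [AddCommGroup G] [Fintype G] [AddCommGroup H] [Fintype H]

theorem sum_addChar_norm_sum_mul_sq (f : G → ℂ) :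
    ∑ Ψ : AddChar G ℂ, ‖∑ p, f p * Ψ p‖ ^ 2 = Fintype.card G * ∑ p, ‖f p‖ ^ 2 := by
  have hsquare (Ψ : AddChar G ℂ) : ((‖∑ p, f p * Ψ p‖ : ℝ) : ℂ) ^ 2 =
      ∑ p, ∑ r, f p * starRingEnd ℂ (f r) * Ψ (p - r) := by
    rw [← Complex.mul_conj', map_sum, sum_mul_sum]
    refine sum_congr rfl fun p _ => sum_congr rfl fun r _ => ?_
    rw [map_mul, sub_eq_add_neg, AddChar.map_add_eq_mul, AddChar.map_neg_eq_conj]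
    ring
  have horthogonal (p : G) : ∑ Ψ : AddChar G ℂ, ∑ r, f p * starRingEnd ℂ (f r) * Ψ (p - r) =
      Fintype.card G * (‖f p‖ : ℂ) ^ 2 := by
    rw [sum_comm]
    simp only [← mul_sum, AddChar.sum_apply_eq_ite, sub_eq_zero, mul_ite, mul_zero, sum_ite_eq,
      mem_univ, if_true, Complex.mul_conj']
    ring
  have h : ((∑ Ψ : AddChar G ℂ, ‖∑ p, f p * Ψ p‖ ^ 2 : ℝ) : ℂ) =
      ((Fintype.card G * ∑ p, ‖f p‖ ^ 2 : ℝ) : ℂ) := by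
    push_cast
    rw [sum_congr rfl fun Ψ _ => hsquare Ψ, sum_comm, sum_congr rfl fun p _ => horthogonal p,
      mul_sum]
  exact_mod_cast h

/-- For a weight `μ` on `X` and statistics `f : X → G`, `h : X → H`, the pointwise difference
between the joint weight of `(f, h)` and that of `(U, h)` with `U` uniform on `G` and independent
of `h`. Half its `ℓ¹` norm is the statistical distance of `(f, h)` from `(U, h)`. -/
noncomputable def uniformityDefect {X G H : Type*} [Fintype X] [Fintype G] (μ : X → ℝ)
    (f : X → G) (h : X → H) (p : G × H) : ℝ :=
  ∑ x with f x = p.1 ∧ h x = p.2, μ x - (∑ x with h x = p.2, μ x) / Fintype.card G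

theorem sum_uniformityDefect_mul_addChar {X : Type*} [Fintype X] (μ : X → ℝ) (f : X → G)
    (h : X → H) (φ : AddChar G ℂ) (φ' : AddChar H ℂ) :
    ∑ p, (uniformityDefect μ f h p : ℂ) * (φ p.1 * φ' p.2) =
      if φ = 0 then 0 else ∑ x, (μ x : ℂ) * (φ (f x) * φ' (h x)) := by
  have hjoint : ∑ p : G × H, ((∑ x with f x = p.1 ∧ h x = p.2, μ x : ℝ) : ℂ) *
      (φ p.1 * φ' p.2) = ∑ x, (μ x : ℂ) * (φ (f x) * φ' (h x)) := by
    rw [← sum_fiberwise univ (fun x => (f x, h x))]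
    refine sum_congr rfl fun p _ => ?_
    simp only [Prod.ext_iff, Complex.ofReal_sum, sum_mul]
    refine sum_congr rfl fun x hx => ?_
    obtain ⟨-, h₁, h₂⟩ := mem_filter.1 hx
    rw [h₁, h₂]
  have hmarginal : ∑ p : G × H, ((∑ x with h x = p.2, μ x : ℝ) : ℂ) * (φ p.1 * φ' p.2) =
      (∑ a, φ a) * ∑ x, (μ x : ℂ) * φ' (h x) := by
    rw [← sum_fiberwise univ h (fun x => (μ x : ℂ) * φ' (h x)), Fintype.sum_prod_type, sum_mul_sum]
    refine sum_congr rfl fun a _ => sum_congr rfl fun b _ => ?_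
    simp only [Complex.ofReal_sum, sum_mul, mul_sum]
    refine sum_congr rfl fun x hx => ?_
    rw [(mem_filter.1 hx).2]
    ring
  have hsplit : ∑ p, (uniformityDefect μ f h p : ℂ) * (φ p.1 * φ' p.2) =
      ∑ x, (μ x : ℂ) * (φ (f x) * φ' (h x)) -
        (∑ a, φ a) * (∑ x, (μ x : ℂ) * φ' (h x)) / Fintype.card G := by
    rw [← hjoint, ← hmarginal, sum_div, ← sum_sub_distrib]
    refine sum_congr rfl fun p _ => ?_
    rw [uniformityDefect]
    push_cast
    ring
  rw [hsplit, AddChar.sum_eq_ite]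
  split_ifs with hφ
  · simp [hφ]
  · simp

variable {X Y : Type*} [Fintype X] [Fintype Y] {μ : X → ℝ} {f : X → Y → G} {h : X → Y → H} {B : ℝ}

theorem sum_uniformityDefect_sq_le (hB₀ : 0 ≤ B)
    (hB : ∀ φ : AddChar G ℂ, φ ≠ 0 → ∀ φ' : AddChar H ℂ,
      ∑ y, ‖∑ x, (μ x : ℂ) * (φ (f x y) * φ' (h x y))‖ ^ 2 ≤ B) :
    ∑ y, ∑ p, uniformityDefect μ (f · y) (h · y) p ^ 2 ≤ B := by
  have hcoeff (Ψ : AddChar (G × H) ℂ) :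
      ∑ y, ‖∑ p, (uniformityDefect μ (f · y) (h · y) p : ℂ) * Ψ p‖ ^ 2 ≤ B := by
    let φ : AddChar G ℂ := Ψ.compAddMonoidHom (AddMonoidHom.inl G H)
    let φ' : AddChar H ℂ := Ψ.compAddMonoidHom (AddMonoidHom.inr G H)
    have hΨ (p : G × H) : Ψ p = φ p.1 * φ' p.2 := by
      simp [φ, φ', ← AddChar.map_add_eq_mul]
    simp only [hΨ, sum_uniformityDefect_mul_addChar]
    by_cases hφ : φ = 0
    · simpa [hφ] using hB₀
    · simpa only [hφ, if_false] using hB φ hφ φ'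
  have hparseval (y : Y) : Fintype.card (G × H) *
      ∑ p, uniformityDefect μ (f · y) (h · y) p ^ 2 =
        ∑ Ψ : AddChar (G × H) ℂ, ‖∑ p, (uniformityDefect μ (f · y) (h · y) p : ℂ) * Ψ p‖ ^ 2 := by
    simp only [sum_addChar_norm_sum_mul_sq, Complex.norm_real, Real.norm_eq_abs, sq_abs]
  refine le_of_mul_le_mul_left (a := (Fintype.card (G × H) : ℝ)) ?_
    (by exact_mod_cast Fintype.card_pos)
  calc _ = ∑ Ψ : AddChar (G × H) ℂ,
          ∑ y, ‖∑ p, (uniformityDefect μ (f · y) (h · y) p : ℂ) * Ψ p‖ ^ 2 := by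
        rw [mul_sum, sum_congr rfl fun y _ => hparseval y, sum_comm]
    _ ≤ ∑ _Ψ : AddChar (G × H) ℂ, B := sum_le_sum fun Ψ _ => hcoeff Ψ
    _ = Fintype.card (G × H) * B := by
        rw [sum_const, card_univ, AddChar.card_eq, nsmul_eq_mul]

theorem sq_sum_abs_uniformityDefect_le (hB₀ : 0 ≤ B)
    (hB : ∀ φ : AddChar G ℂ, φ ≠ 0 → ∀ φ' : AddChar H ℂ,
      ∑ y, ‖∑ x, (μ x : ℂ) * (φ (f x y) * φ' (h x y))‖ ^ 2 ≤ B) :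
    (∑ t : G × H × Y, |uniformityDefect μ (f · t.2.2) (h · t.2.2) (t.1, t.2.1)|) ^ 2 ≤
      Fintype.card G * Fintype.card H * Fintype.card Y * B := by
  have hreorder : ∑ t : G × H × Y, uniformityDefect μ (f · t.2.2) (h · t.2.2) (t.1, t.2.1) ^ 2 =
      ∑ y, ∑ p, uniformityDefect μ (f · y) (h · y) p ^ 2 := by
    rw [← Fintype.sum_prod_type']
    exact Fintype.sum_equiv ((Equiv.prodAssoc G H Y).symm.trans (Equiv.prodComm _ _)) _ _
      fun t => rfl
  calc _ ≤ (#(univ : Finset (G × H × Y)) : ℝ) * ∑ t : G × H × Y,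
          |uniformityDefect μ (f · t.2.2) (h · t.2.2) (t.1, t.2.1)| ^ 2 :=
        sq_sum_le_card_mul_sum_sq
    _ = Fintype.card G * Fintype.card H * Fintype.card Y *
          ∑ y, ∑ p, uniformityDefect μ (f · y) (h · y) p ^ 2 := by
        simp only [sq_abs, hreorder, card_univ, Fintype.card_prod]
        push_cast
        ring
    _ ≤ _ := by gcongr; exact sum_uniformityDefect_sq_le hB₀ hB

end Xor

section DiscreteLog

variable {F : Type*} [Field F] [Fintype F] {M : ℕ}

theorem natCast_zmod_eq_of_pow_eq_pow (hM : M ∣ Fintype.card F - 1) {g : Fˣ}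
    (hg : ∀ z : Fˣ, z ∈ Subgroup.zpowers g) {m n : ℕ} (h : g ^ m = g ^ n) :
    (m : ZMod M) = n := by
  rw [pow_eq_pow_iff_modEq, orderOf_eq_card_of_forall_mem_zpowers hg, Nat.card_units,
    Nat.card_eq_fintype_card] at h
  exact (ZMod.natCast_eq_natCast_iff _ _ _).2 (h.of_dvd hM)

theorem exists_mulChar_eq_addChar_dlog [NeZero M] (hM : M ∣ Fintype.card F - 1) {g : Fˣ}
    {dlog : Fˣ → ℕ} (hdlog : ∀ z, g ^ dlog z = z) (φ : AddChar (ZMod M) ℂ) :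
    ∃ χ : MulChar F ℂ, (∀ z : Fˣ, χ z = φ (dlog z)) ∧ (φ ≠ 0 → χ ≠ 1) := by
  have hg (z : Fˣ) : z ∈ Subgroup.zpowers g := ⟨dlog z, by simpa using hdlog z⟩
  let f : Fˣ →* ℂ :=
    { toFun z := φ (dlog z)
      map_one' := by
        rw [natCast_zmod_eq_of_pow_eq_pow hM hg (n := 0) (by rw [hdlog, pow_zero]), Nat.cast_zero,
          AddChar.map_zero_eq_one]
      map_mul' z w := by
        rw [natCast_zmod_eq_of_pow_eq_pow hM hg (n := dlog z + dlog w)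
          (by rw [pow_add, hdlog, hdlog, hdlog]), Nat.cast_add, AddChar.map_add_eq_mul] }
  have hf (z : Fˣ) : MulChar.ofUnitHom f.toHomUnits z = φ (dlog z) := by
    rw [MulChar.ofUnitHom_coe]
    rfl
  refine ⟨MulChar.ofUnitHom f.toHomUnits, hf, fun hφ htrivial => hφ ?_⟩
  ext a
  have ha := hf (g ^ a.val)
  rw [htrivial, MulChar.one_apply_coe, natCast_zmod_eq_of_pow_eq_pow hM hg (hdlog _),
    ZMod.natCast_zmod_val] at ha
  rw [← ha, AddChar.zero_apply]

end DiscreteLog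

theorem sq_mul_rpow_mul_two_rpow {q : ℝ} (hq : 0 ≤ q) (c k : ℝ) :
    (c * q ^ ((1 : ℝ) / 4) * 2 ^ (1 - k / 2)) ^ 2 = 4 * (c ^ 2 * √q * 2 ^ (-k)) := by
  have hroot : (q ^ ((1 : ℝ) / 4)) ^ 2 = √q := by
    rw [← Real.rpow_natCast, ← Real.rpow_mul hq, Real.sqrt_eq_rpow]
    norm_num
  have hpow : ((2 : ℝ) ^ (1 - k / 2)) ^ 2 = 4 * 2 ^ (-k) := by
    rw [← Real.rpow_natCast, ← Real.rpow_mul zero_le_two,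
      show (1 - k / 2) * ((2 : ℕ) : ℝ) = 2 + -k by push_cast; ring, Real.rpow_add two_pos]
    norm_num
  rw [mul_pow, mul_pow, hroot, hpow]
  ring

/-- Let F = F_q with M | q-1, g a generator of F^×, and
nmExt(x,y) = (log_g(x+y)) mod M ∈ Z_M (with x+y = 0 handled arbitrarily). Then nmExt is
a (k, ε)-non-malleable extractor with ε = M·q^{1/4}·2^{1-k/2}: for any source X on F
with H∞(X) ≥ k, Y uniform on F independent of X, and any A : F → F with A(y) ≠ y for
all y, the distribution (nmExt(X,Y), nmExt(X,A(Y)), Y) is ε-close to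
(U_{Z_M}, nmExt(X,A(Y)), Y). -/
theorem stmt_18 {F : Type*} [Field F] [Fintype F] [DecidableEq F]
    (M : ℕ) [NeZero M] (hM : M ∣ Fintype.card F - 1)
    (g : Fˣ) (hg : ∀ z : Fˣ, z ∈ Subgroup.zpowers g)
    (dlog : Fˣ → ℕ) (hdlog : ∀ z, g ^ dlog z = z)
    (nmExt : F → F → ZMod M)
    (hnm : ∀ x y : F, ∀ hxy : x + y ≠ 0,
      nmExt x y = ((dlog (Units.mk0 (x + y) hxy) : ℕ) : ZMod M))
    (k : ℝ) (μ : F → ℝ) (hμ0 : ∀ x, 0 ≤ μ x) (hμ1 : ∑ x, μ x = 1)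
    (hk : ∀ x, μ x ≤ (2 : ℝ) ^ (-k))
    (A : F → F) (hA : ∀ y, A y ≠ y) :
    (∑ t : ZMod M × ZMod M × F,
        |(∑ x ∈ Finset.univ.filter
            (fun x : F => nmExt x t.2.2 = t.1 ∧ nmExt x (A t.2.2) = t.2.1), μ x) /
              (Fintype.card F : ℝ) -
          (∑ x ∈ Finset.univ.filter (fun x : F => nmExt x (A t.2.2) = t.2.1), μ x) /
            ((M : ℝ) * (Fintype.card F : ℝ))|) / 2 ≤
      (M : ℝ) * (Fintype.card F : ℝ) ^ ((1 : ℝ)/4) * (2 : ℝ) ^ (1 - k/2) := by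
  have hchar (φ : AddChar (ZMod M) ℂ) :
      ∃ χ : MulChar F ℂ, (∀ x y, x + y ≠ 0 → φ (nmExt x y) = χ (x + y)) ∧ (φ ≠ 0 → χ ≠ 1) := by
    obtain ⟨χ, hχ, hχ₁⟩ := exists_mulChar_eq_addChar_dlog hM hdlog φ
    exact ⟨χ, fun x y hxy => by rw [hnm x y hxy, ← hχ, Units.val_mk0], hχ₁⟩
  have hcoeff (φ : AddChar (ZMod M) ℂ) (hφ : φ ≠ 0) (φ' : AddChar (ZMod M) ℂ) :
      ∑ y, ‖∑ x, (μ x : ℂ) * (φ (nmExt x y) * φ' (nmExt x (A y)))‖ ^ 2 ≤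
        8 * (Fintype.card F * √(Fintype.card F)) * 2 ^ (-k) := by
    obtain ⟨χ, hχ, hχ₁⟩ := hchar φ
    obtain ⟨ψ, hψ, -⟩ := hchar φ'
    exact sum_norm_sum_mul_sq_le_of_mulChar (fun _ _ => φ.norm_apply _) (fun _ _ => φ'.norm_apply _)
      (hχ₁ hφ) hχ hψ hA hμ0 hμ1 hk
  have hdefect := sq_sum_abs_uniformityDefect_le (by positivity) hcoeff
  have hq : (0 : ℝ) < Fintype.card F := by exact_mod_cast Fintype.card_pos
  have hscale (a b : ℝ) : |a / Fintype.card F - b / (M * Fintype.card F)| =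
      |a - b / M| / Fintype.card F := by
    rw [← div_div, ← sub_div, abs_div, abs_of_pos hq]
  simp only [uniformityDefect, ZMod.card] at hdefect
  simp only [hscale]
  rw [← sum_div, div_div, div_le_iff₀ (by positivity)]
  refine le_of_sq_le_sq (hdefect.trans ?_) (by positivity)
  rw [mul_pow, sq_mul_rpow_mul_two_rpow hq.le]
  have : 0 ≤ (M * Fintype.card F : ℝ) ^ 2 * √(Fintype.card F) * 2 ^ (-k) := by positivity
  linarith
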